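/- arXiv:1809.03673 — 5 statements merged into one kernel-verified Lean document; each statement's English description precedes it below -/
import Mathlib

section
/- For every integer α with 4 ≤ α ≤ 6 and every nonnegative integer N, the equation αx² + (3y² − 2y) + (3z² − 2z) + 3(3t² − 2t) = N has an integer solution in ℤ⁴. That is, the quaternary mixed sums αx²+P₈(y)+P₈(z)+3P₈(t) for 4 ≤ α ≤ 6 are universal. -/
lemma exists_shift (A B : ℤ) (hA : 0 < A) : ∃ k : ℤ, 2 * (B - k * A) ≤ A ∧ -A ≤ 2 * (B - k * A) := by
  refine ⟨(2 * B + A) / (2 * A), ?_, ?_⟩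
  · have h := Int.emod_add_mul_ediv (2 * B + A) (2 * A)
    have h2 := Int.emod_lt_of_pos (2 * B + A) (show 0 < 2 * A by omega)
    nlinarith
  · have h := Int.emod_add_mul_ediv (2 * B + A) (2 * A)
    have h2 := Int.emod_nonneg (2 * B + A) (show 2 * A ≠ 0 by omega)
    nlinarith

lemma bin_red (D : ℤ) (hD : 0 < D) : ∀ (m : ℕ) (A B C : ℤ), A ≤ m → 0 < A → A * C - B ^ 2 = D →
    ∃ p q u v : ℤ, p * v - q * u = 1 ∧
      0 < A * p ^ 2 + 2 * B * p * u + C * u ^ 2 ∧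
      2 * (A * p * q + B * (p * v + q * u) + C * u * v) ≤ A * p ^ 2 + 2 * B * p * u + C * u ^ 2 ∧
      -(A * p ^ 2 + 2 * B * p * u + C * u ^ 2) ≤ 2 * (A * p * q + B * (p * v + q * u) + C * u * v) ∧
      A * p ^ 2 + 2 * B * p * u + C * u ^ 2 ≤ A * q ^ 2 + 2 * B * q * v + C * v ^ 2 := by
  intro m
  induction m with
  | zero => intro A B C h1 h2; simp at h1; omega
  | succ m ih =>
    intro A B C h1 h2 h3
    obtain ⟨k, hk1, hk2⟩ := exists_shift A B h2
    by_cases hc : A ≤ C - 2 * k * B + k ^ 2 * A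
    · refine ⟨1, -k, 0, 1, by ring, by nlinarith, by nlinarith, by nlinarith, by nlinarith⟩
    · push Not at hc
      have hpos : 0 < C - 2 * k * B + k ^ 2 * A := by
        have : A * (C - 2 * k * B + k ^ 2 * A) = D + (B - k * A) ^ 2 := by rw [← h3]; ring
        have h5 : 0 < A * (C - 2 * k * B + k ^ 2 * A) := by rw [this]; positivity
        exact pos_of_mul_pos_right h5 h2.le
      obtain ⟨p, q, u, v, e0, e1, e2, e3, e4⟩ := ih (C - 2 * k * B + k ^ 2 * A) (-(B - k * A)) A
        (by push_cast at h1; omega) hpos (by rw [← h3]; ring)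
      refine ⟨-u - k * p, -v - k * q, p, q, by linarith, ?_, ?_, ?_, ?_⟩
      · convert e1 using 1; ring
      · convert e2 using 1 <;> ring
      · convert e3 using 1 <;> ring
      · convert e4 using 1 <;> ring

def Adj3 (a b c r s t u v w : ℤ) : ℤ :=
  (b * c - r ^ 2) * u ^ 2 + (a * c - s ^ 2) * v ^ 2 + (a * b - t ^ 2) * w ^ 2 +
    2 * (s * t - a * r) * v * w + 2 * (t * r - b * s) * u * w + 2 * (r * s - c * t) * u * v

def Det3 (a b c r s t : ℤ) : ℤ := a * b * c + 2 * r * s * t - a * r ^ 2 - b * s ^ 2 - c * t ^ 2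

def Q3 (a b c r s t x y z : ℤ) : ℤ :=
  a * x ^ 2 + b * y ^ 2 + c * z ^ 2 + 2 * r * y * z + 2 * s * x * z + 2 * t * x * y

lemma tern_step (d : ℤ) (hd : 0 < d) (a b c r s t : ℤ)
    (ha : 0 < a) (hC : 0 < a * b - t ^ 2) (hdet : Det3 a b c r s t = d) (P : ℤ → Prop)
    (hP : ∀ u v w, P (Adj3 a b c r s t u v w)) :
    ∃ b' c' r' s' t' : ℤ, 0 < a * b' - t' ^ 2 ∧ Det3 a b' c' r' s' t' = d ∧
      (∀ u v w, P (Adj3 a b' c' r' s' t' u v w)) ∧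
      (∀ x y z, ∃ x' y' z', Q3 a b c r s t x y z = Q3 a b' c' r' s' t' x' y' z') ∧
      3 * (a * b' - t' ^ 2) ^ 2 ≤ 4 * (a * d) ∧ 2 * t' ≤ a ∧ -a ≤ 2 * t' ∧
      2 * s' ≤ a ∧ -a ≤ 2 * s' := by
  obtain ⟨p, q, u, v, e0, e1, e2, e3, e4⟩ := bin_red (a * d) (by positivity)
    (a * b - t ^ 2).toNat (a * b - t ^ 2) (a * r - s * t) (a * c - s ^ 2)
    (by omega) hC (by rw [← hdet]; unfold Det3; ring)
  obtain ⟨k, hk1, hk2⟩ := exists_shift a (t * p + s * u) ha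
  obtain ⟨l, hl1, hl2⟩ := exists_shift a (t * q + s * v) ha
  -- x = X - k Y - l Z, y = p Y + q Z, z = u Y + v Z
  refine ⟨Q3 a b c r s t (-k) p u, Q3 a b c r s t (-l) q v,
    a * k * l - t * (k * q + l * p) - s * (k * v + l * u) + b * p * q + r * (p * v + q * u) + c * u * v,
    t * q + s * v - l * a, t * p + s * u - k * a, ?_, ?_, ?_, ?_, ?_, hk1, hk2, hl1, hl2⟩
  · convert e1 using 1; unfold Q3; ring
  · have : d = Det3 a b c r s t * (p * v - q * u) ^ 2 := by rw [e0, hdet]; ring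
    rw [this]; unfold Q3 Det3; ring
  · intro u1 v1 w1
    have := hP ((p * v - q * u) * u1) ((k * v - l * u) * u1 + v * v1 - u * w1) ((l * p - k * q) * u1 + p * w1 - q * v1)
    convert this using 1
    unfold Adj3 Q3; ring
  · intro x y z
    refine ⟨x + k * (v * y - q * z) + l * (p * z - u * y), v * y - q * z, p * z - u * y, ?_⟩
    have hy : y = p * (v * y - q * z) + q * (p * z - u * y) := by linear_combination (-y) * e0
    have hz : z = u * (v * y - q * z) + v * (p * z - u * y) := by linear_combination (-z) * e0
    generalize v * y - q * z = Y at *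
    generalize p * z - u * y = Z at *
    subst hy hz
    unfold Q3; ring
  · have key : (a * Q3 a b c r s t (-k) p u - (t * p + s * u - k * a) ^ 2) = ((a * b - t ^ 2) * p ^ 2 + 2 * (a * r - s * t) * p * u + (a * c - s ^ 2) * u ^ 2) := by unfold Q3; ring
    rw [key]
    have hdd : ((a * b - t ^ 2) * p ^ 2 + 2 * (a * r - s * t) * p * u + (a * c - s ^ 2) * u ^ 2) * ((a * b - t ^ 2) * q ^ 2 + 2 * (a * r - s * t) * q * v + (a * c - s ^ 2) * v ^ 2) - ((a * b - t ^ 2) * p * q + (a * r - s * t) * (p * v + q * u) + (a * c - s ^ 2) * u * v) ^ 2 = a * d := by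
      have : a * d = a * Det3 a b c r s t * (p * v - q * u) ^ 2 := by rw [e0, hdet]; ring
      rw [this]; unfold Det3; ring
    generalize ((a * b - t ^ 2) * p ^ 2 + 2 * (a * r - s * t) * p * u + (a * c - s ^ 2) * u ^ 2) = A' at *
    generalize ((a * b - t ^ 2) * q ^ 2 + 2 * (a * r - s * t) * q * v + (a * c - s ^ 2) * v ^ 2) = C' at *
    generalize ((a * b - t ^ 2) * p * q + (a * r - s * t) * (p * v + q * u) + (a * c - s ^ 2) * u * v) = B' at *
    nlinarith

lemma tern_red (d : ℤ) (hd : 0 < d) (hd3 : d ≤ 3) (P : ℤ → Prop) : ∀ (m : ℕ) (a b c r s t : ℤ), a ≤ m →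
    0 < a → 0 < a * b - t ^ 2 → Det3 a b c r s t = d →
    (∀ u v w, P (Adj3 a b c r s t u v w)) →
    ∃ b' c' r' : ℤ, 0 < b' ∧ b' * c' - r' ^ 2 = d ∧
      (∀ u v w, P (Adj3 1 b' c' r' 0 0 u v w)) ∧
      (∀ x y z, ∃ x' y' z', Q3 a b c r s t x y z = Q3 1 b' c' r' 0 0 x' y' z') := by
  intro m
  induction m with
  | zero => intro a b c r s t h1 h2; simp at h1; omega
  | succ m ih =>
    intro a b c r s t h1 h2 h3 h4 h5
    obtain ⟨b', c', r', s', t', g1, g2, g3, g4, g5, g6, g7, g8, g9⟩ := tern_step d hd a b c r s t h2 h3 h4 P h5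
    have hb' : 0 < b' := by
      have : 0 < a * b' := by nlinarith [sq_nonneg t']
      exact pos_of_mul_pos_right this h2.le
    by_cases hab : b' < a
    · obtain ⟨b2, c2, r2, k1, k2, k3, k4⟩ := ih b' a c' s' r' t' (by push_cast at h1; omega) hb'
        (by linarith) (by rw [← g2]; unfold Det3; ring)
        (by intro u v w
            have := g3 v u w
            convert this using 1
            unfold Adj3; ring)
      refine ⟨b2, c2, r2, k1, k2, k3, ?_⟩
      intro x y z
      obtain ⟨x1, y1, z1, e⟩ := g4 x y z
      obtain ⟨x2, y2, z2, e2⟩ := k4 y1 x1 z1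
      refine ⟨x2, y2, z2, ?_⟩
      rw [e, ← e2]; unfold Q3; ring
    · push Not at hab
      have ht : 4 * t' ^ 2 ≤ a ^ 2 := by nlinarith
      have h34 : 3 * a ^ 2 ≤ 4 * (a * b' - t' ^ 2) := by nlinarith
      have h5 : 27 * a ^ 4 ≤ 64 * (a * d) := by nlinarith
      have ha1 : a = 1 := by
        by_contra hne
        have h2a : 2 ≤ a := by omega
        have h8 : 8 ≤ a ^ 3 := by
          calc (8:ℤ) = 2 ^ 3 := by norm_num
            _ ≤ a ^ 3 := by gcongr
        have : a * (27 * a ^ 3) ≤ a * (64 * d) := by nlinarith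
        have := le_of_mul_le_mul_left this h2
        linarith
      subst ha1
      obtain rfl : t' = 0 := by omega
      obtain rfl : s' = 0 := by omega
      refine ⟨b', c', r', hb', ?_, g3, g4⟩
      rw [← g2]; unfold Det3; ring

lemma tern_one (a b c r s t : ℤ) (ha : 0 < a) (hC : 0 < a * b - t ^ 2)
    (hdet : Det3 a b c r s t = 1) : ∃ x y z : ℤ, c = x ^ 2 + y ^ 2 + z ^ 2 := by
  obtain ⟨b', c', r', k1, k2, -, k4⟩ := tern_red 1 (by norm_num) (by norm_num) (fun _ => True) a.toNat
    a b c r s t (by omega) ha hC hdet (by simp)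
  obtain ⟨x, y, z, e⟩ := k4 0 0 1
  obtain ⟨p, q, u, v, e0, e1, e2, e3, e4⟩ := bin_red 1 (by norm_num) b'.toNat b' r' c' (by omega) k1 k2
  have hdd : (b' * p ^ 2 + 2 * r' * p * u + c' * u ^ 2) * (b' * q ^ 2 + 2 * r' * q * v + c' * v ^ 2) - (b' * p * q + r' * (p * v + q * u) + c' * u * v) ^ 2 = 1 := by
    have : (1 : ℤ) = (b' * c' - r' ^ 2) * (p * v - q * u) ^ 2 := by rw [e0, k2]; ring
    rw [this]; ring
  have hy : y = p * (v * y - q * z) + q * (p * z - u * y) := by linear_combination (-y) * e0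
  have hz : z = u * (v * y - q * z) + v * (p * z - u * y) := by linear_combination (-z) * e0
  generalize v * y - q * z = Y at *
  generalize p * z - u * y = Z at *
  have key : c = x ^ 2 + (b' * p ^ 2 + 2 * r' * p * u + c' * u ^ 2) * Y ^ 2 + 2 * (b' * p * q + r' * (p * v + q * u) + c' * u * v) * Y * Z + (b' * q ^ 2 + 2 * r' * q * v + c' * v ^ 2) * Z ^ 2 := by
    have : c = Q3 a b c r s t 0 0 1 := by unfold Q3; ring
    rw [this, e, hy, hz]; unfold Q3; ring
  generalize (b' * p ^ 2 + 2 * r' * p * u + c' * u ^ 2) = A' at *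
  generalize (b' * q ^ 2 + 2 * r' * q * v + c' * v ^ 2) = C' at *
  generalize (b' * p * q + r' * (p * v + q * u) + c' * u * v) = B' at *
  have hA : A' = 1 := by nlinarith
  subst hA
  obtain rfl : B' = 0 := by omega
  obtain rfl : C' = 1 := by linarith
  exact ⟨x, Y, Z, by rw [key]; ring⟩

lemma tern_three (a b c r s t : ℤ) (ha : 0 < a) (hC : 0 < a * b - t ^ 2)
    (hdet : Det3 a b c r s t = 3) (hC3 : (a * b - t ^ 2) % 3 = 1) :
    ∃ x y z : ℤ, c = x ^ 2 + y ^ 2 + 3 * z ^ 2 := by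
  obtain ⟨b', c', r', k1, k2, k3, k4⟩ := tern_red 3 (by norm_num) (by norm_num) (fun n => n % 3 ≠ 2) a.toNat
    a b c r s t (by omega) ha hC hdet (by
      intro u v w h
      have h1 : (a * b - t ^ 2) * Adj3 a b c r s t u v w =
        ((a * b - t ^ 2) * w + (s * t - a * r) * v + (t * r - b * s) * u) ^ 2
          + 3 * (a * v ^ 2 + b * u ^ 2 - 2 * t * u * v) := by
        rw [← hdet]; unfold Adj3 Det3; ring
      generalize ((a * b - t ^ 2) * w + (s * t - a * r) * v + (t * r - b * s) * u) = X at h1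
      have h2 : ((a * b - t ^ 2) * Adj3 a b c r s t u v w) % 3 = 2 := by
        rw [Int.mul_emod, hC3, h]; norm_num
      have h3 : X ^ 2 % 3 ≠ 2 := by
        have : X % 3 = 0 ∨ X % 3 = 1 ∨ X % 3 = 2 := by omega
        rcases this with h | h | h <;> simp [pow_two, Int.mul_emod, h]
      rw [h1] at h2
      omega)
  obtain ⟨x, y, z, e⟩ := k4 0 0 1
  obtain ⟨p, q, u, v, e0, e1, e2, e3, e4⟩ := bin_red 3 (by norm_num) b'.toNat b' r' c' (by omega) k1 k2
  have hdd : (b' * p ^ 2 + 2 * r' * p * u + c' * u ^ 2) * (b' * q ^ 2 + 2 * r' * q * v + c' * v ^ 2) - (b' * p * q + r' * (p * v + q * u) + c' * u * v) ^ 2 = 3 := by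
    have : (3 : ℤ) = (b' * c' - r' ^ 2) * (p * v - q * u) ^ 2 := by rw [e0, k2]; ring
    rw [this]; ring
  have hne : (b' * p ^ 2 + 2 * r' * p * u + c' * u ^ 2) % 3 ≠ 2 := by
    have := k3 0 (-u) p
    convert this using 2
    unfold Adj3; ring
  have hy : y = p * (v * y - q * z) + q * (p * z - u * y) := by linear_combination (-y) * e0
  have hz : z = u * (v * y - q * z) + v * (p * z - u * y) := by linear_combination (-z) * e0
  generalize v * y - q * z = Y at *
  generalize p * z - u * y = Z at *
  have key : c = x ^ 2 + (b' * p ^ 2 + 2 * r' * p * u + c' * u ^ 2) * Y ^ 2 + 2 * (b' * p * q + r' * (p * v + q * u) + c' * u * v) * Y * Z + (b' * q ^ 2 + 2 * r' * q * v + c' * v ^ 2) * Z ^ 2 := by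
    have : c = Q3 a b c r s t 0 0 1 := by unfold Q3; ring
    rw [this, e, hy, hz]; unfold Q3; ring
  generalize (b' * p ^ 2 + 2 * r' * p * u + c' * u ^ 2) = A' at *
  generalize (b' * q ^ 2 + 2 * r' * q * v + c' * v ^ 2) = C' at *
  generalize (b' * p * q + r' * (p * v + q * u) + c' * u * v) = B' at *
  have hA : A' ≤ 2 := by nlinarith
  have hA : A' = 1 := by omega
  subst hA
  obtain rfl : B' = 0 := by omega
  obtain rfl : C' = 3 := by linarith
  exact ⟨x, Y, Z, by rw [key]; ring⟩

lemma sq_of_jacobi (p : ℕ) (hp : p.Prime) (b : ℤ) (h : jacobiSym (-b) p = 1) :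
    ∃ h k : ℤ, b + h ^ 2 = p * k := by
  have := Fact.mk hp
  obtain ⟨x, hx⟩ := ZMod.isSquare_of_jacobiSym_eq_one h
  obtain ⟨y, rfl⟩ := ZMod.intCast_surjective x
  refine ⟨y, ?_⟩
  have : ((b + y ^ 2 : ℤ) : ZMod p) = 0 := by
    push_cast at hx ⊢
    linear_combination -hx
  rw [ZMod.intCast_zmod_eq_zero_iff_dvd] at this
  obtain ⟨k, hk⟩ := this
  exact ⟨k, hk⟩

lemma dirichlet (e q : ℤ) (hq : 0 < q) (hc : IsCoprime e q) :
    ∃ (p : ℕ) (k : ℕ), p.Prime ∧ (p : ℤ) = e + q * k := by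
  obtain ⟨p, h1, h2, h3⟩ := Nat.forall_exists_prime_gt_and_zmodEq e.toNat (q := q.toNat) (a := e) (by omega)
    (by rwa [Int.toNat_of_nonneg hq.le])
  rw [Int.toNat_of_nonneg hq.le] at h3
  obtain ⟨k, hk⟩ := h3.symm.dvd
  have : 0 ≤ k := by
    by_contra hneg
    push Not at hneg
    have : q * k < 0 := by nlinarith
    omega
  lift k to ℕ using this
  exact ⟨p, k, h2, by linarith⟩

lemma jac_neg_one (p : ℕ) (hp : p % 4 = 1) : jacobiSym (-1) p = 1 := by
  rw [jacobiSym.at_neg_one (Nat.odd_iff.2 (by omega)), ZMod.χ₄_nat_one_mod_four hp]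

lemma jac_neg (b : ℤ) (p : ℕ) (hp : p % 4 = 1) : jacobiSym (-b) p = jacobiSym b p := by
  rw [jacobiSym.neg _ (Nat.odd_iff.2 (by omega)), ZMod.χ₄_nat_one_mod_four hp, one_mul]

lemma prep_two (n : ℤ) (hn : 0 < n) (h : n % 4 = 2) : ∃ (p : ℕ) (b h k : ℤ), 0 < p ∧ 0 < b ∧
    (p : ℤ) = b * n - 1 ∧ b + h ^ 2 = p * k := by
  obtain ⟨p, k, hp, e⟩ := dirichlet (n - 1) (4 * n) (by omega) (by
    have h1 : IsCoprime (n - 1) n := ⟨-1, 1, by ring⟩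
    have h2 : IsCoprime (n - 1) 4 := by
      obtain ⟨j, hj⟩ : ∃ j, n = 4 * j + 2 := ⟨n / 4, by omega⟩
      exact ⟨1, -j, by rw [hj]; ring⟩
    exact h2.mul_right h1)
  have hp4 : p % 4 = 1 := by
    have : (p : ℤ) = n - 1 + 4 * (n * k) := by rw [e]; ring
    omega
  have hs : jacobiSym (-((1 + 4 * k : ℕ) : ℤ)) p = 1 := by
    rw [jac_neg _ _ hp4, jacobiSym.quadratic_reciprocity_one_mod_four (by omega) (Nat.odd_iff.2 (by omega)),
      ← jac_neg_one (1 + 4 * k) (by omega)]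
    apply jacobiSym.mod_left'
    apply Int.ModEq.symm
    rw [Int.modEq_iff_dvd]
    exact ⟨n, by rw [e]; push_cast; ring⟩
  obtain ⟨h, k', hk⟩ := sq_of_jacobi p hp _ hs
  exact ⟨p, _, h, k', hp.pos, by positivity, by rw [e]; push_cast; ring, hk⟩

lemma prep_one (n : ℤ) (hn : 0 < n) (h : n % 4 = 1) : ∃ (p : ℕ) (b h k : ℤ), 0 < p ∧ 0 < b ∧
    (p : ℤ) = b * n - 1 ∧ b + h ^ 2 = p * k := by
  obtain ⟨p, k, hp, e⟩ := dirichlet (2 * n - 1) (8 * n) (by omega) (by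
    have h1 : IsCoprime (2 * n - 1) n := ⟨-1, 2, by ring⟩
    have h2 : IsCoprime (2 * n - 1) 8 := by
      obtain ⟨j, hj⟩ : ∃ j, n = 4 * j + 1 := ⟨n / 4, by omega⟩
      exact ⟨1, -j, by rw [hj]; ring⟩
    exact h2.mul_right h1)
  have hp8 : p % 8 = 1 := by
    have : (p : ℤ) = 2 * n - 1 + 8 * (n * k) := by rw [e]; ring
    omega
  have h2 : jacobiSym 2 p = 1 := by
    rw [jacobiSym.at_two (Nat.odd_iff.2 (by omega)), ZMod.χ₈_nat_eq_if_mod_eight]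
    simp [hp8]; omega
  have hs : jacobiSym (-(2 * (1 + 4 * k : ℕ) : ℤ)) p = 1 := by
    rw [jac_neg _ _ (by omega), jacobiSym.mul_left, h2, one_mul, jacobiSym.quadratic_reciprocity_one_mod_four (by omega) (Nat.odd_iff.2 (by omega)),
      ← jac_neg_one (1 + 4 * k) (by omega)]
    apply jacobiSym.mod_left'
    apply Int.ModEq.symm
    rw [Int.modEq_iff_dvd]
    exact ⟨2 * n, by rw [e]; push_cast; ring⟩
  obtain ⟨h, k', hk⟩ := sq_of_jacobi p hp _ hs
  exact ⟨p, _, h, k', hp.pos, by positivity, by rw [e]; push_cast; ring, hk⟩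

lemma prep_three (n : ℤ) (hn : 0 < n) (h : n % 3 = 2) : ∃ (p : ℕ) (b h k : ℤ), 0 < p ∧ 0 < b ∧
    b % 3 = 1 ∧ (p : ℤ) = b * n - 3 ∧ b + h ^ 2 = p * k := by
  obtain ⟨p, k, hp, e⟩ := dirichlet (4 * n - 3) (48 * n) (by omega) (by
    obtain ⟨j, hj⟩ : ∃ j, n = 3 * j + 2 := ⟨n / 3, by omega⟩
    have h3 : IsCoprime (4 * n - 3) 3 := ⟨-1, 4 * j + 2, by rw [hj]; ring⟩
    have h1 : IsCoprime (4 * n - 3) n := by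
      have : IsCoprime (3 : ℤ) n := ⟨1 + j, -1, by rw [hj]; ring⟩
      have h4 : IsCoprime (-3 + n * 4) n := IsCoprime.add_mul_left_left this.neg_left 4
      convert h4 using 1; ring
    have h2 : IsCoprime (4 * n - 3) 2 := ⟨1, 2 - 2 * n, by ring⟩
    have h16 : IsCoprime (4 * n - 3) 16 := by
      have := h2.pow_right (n := 4)
      norm_num at this; exact this
    have := (h16.mul_right h3).mul_right h1
    norm_num at this; exact this)
  have hp4 : p % 4 = 1 := by
    have : (p : ℤ) = 4 * n - 3 + 48 * (n * k) := by rw [e]; ring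
    omega
  have h4 : jacobiSym 4 p = 1 := jacobiSym.at_four (Nat.odd_iff.2 (by omega))
  have h3 : jacobiSym (-3) (1 + 12 * k) = 1 := by
    rw [jac_neg _ _ (by omega)]
    have := jacobiSym.quadratic_reciprocity_one_mod_four' (a := 3) (b := 1 + 12 * k) (by decide) (by omega)
    push_cast at this
    rw [this, jacobiSym.mod_left]
    have : (1 + 12 * (k : ℤ)) % (3 : ℕ) = 1 := by omega
    rw [this, jacobiSym.one_left]
  have hs : jacobiSym (-(4 * (1 + 12 * k : ℕ) : ℤ)) p = 1 := by
    rw [jac_neg _ _ (by omega), jacobiSym.mul_left, h4, one_mul, jacobiSym.quadratic_reciprocity_one_mod_four (by omega) (Nat.odd_iff.2 (by omega)),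
      ← h3]
    apply jacobiSym.mod_left'
    apply Int.ModEq.symm
    rw [Int.modEq_iff_dvd]
    exact ⟨4 * n, by rw [e]; push_cast; ring⟩
  obtain ⟨h, k', hk⟩ := sq_of_jacobi p hp _ hs
  exact ⟨p, _, h, k', hp.pos, by positivity, by push_cast; omega, by rw [e]; push_cast; ring, hk⟩

lemma three_sq_aux (n : ℤ) (h : ∃ (p : ℕ) (b h k : ℤ), 0 < p ∧ 0 < b ∧
    (p : ℤ) = b * n - 1 ∧ b + h ^ 2 = p * k) : ∃ x y z : ℤ, n = x ^ 2 + y ^ 2 + z ^ 2 := by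
  obtain ⟨p, b, h, k, h1, h2, h3, h4⟩ := h
  have hp : (0 : ℤ) < p := by exact_mod_cast h1
  have hk : 0 < k := by
    have : 0 < (p : ℤ) * k := by rw [← h4]; positivity
    exact pos_of_mul_pos_right this hp.le
  refine tern_one k p n 0 1 h hk (by linarith) ?_
  unfold Det3
  linear_combination (-n) * h4 - h3

lemma three_sq (n : ℤ) (hn : 0 < n) (h : n % 4 = 1 ∨ n % 4 = 2) :
    ∃ x y z : ℤ, n = x ^ 2 + y ^ 2 + z ^ 2 := by
  rcases h with h | h
  · exact three_sq_aux n (prep_one n hn h)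
  · exact three_sq_aux n (prep_two n hn h)

lemma rep_113 (n : ℤ) (hn : 0 < n) (h : n % 3 = 2) :
    ∃ x y z : ℤ, n = x ^ 2 + y ^ 2 + 3 * z ^ 2 := by
  obtain ⟨p, b, h, k, h1, h2, h2', h3, h4⟩ := prep_three n hn h
  have hp : (0 : ℤ) < p := by exact_mod_cast h1
  have hk : 0 < k := by
    have : 0 < (p : ℤ) * k := by rw [← h4]; positivity
    exact pos_of_mul_pos_right this hp.le
  have hb : k * p - h ^ 2 = b := by linarith
  refine tern_three k p n 0 1 h hk (by linarith) ?_ (by rw [hb]; exact h2')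
  unfold Det3
  linear_combination (-n) * h4 - h3

lemma sq_mod3 (X : ℤ) : (X % 3 = 0 ∧ X ^ 2 % 3 = 0) ∨ (X % 3 ≠ 0 ∧ X ^ 2 % 3 = 1) := by
  have : X % 3 = 0 ∨ X % 3 = 1 ∨ X % 3 = 2 := by omega
  rcases this with h | h | h <;> simp [pow_two, Int.mul_emod, h]

lemma sq_mod4 (X : ℤ) : (X % 2 = 0 ∧ X ^ 2 % 4 = 0) ∨ (X % 2 = 1 ∧ X ^ 2 % 4 = 1) := by
  have : X % 4 = 0 ∨ X % 4 = 1 ∨ X % 4 = 2 ∨ X % 4 = 3 := by omega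
  rcases this with h | h | h | h
  · left; exact ⟨by omega, by simp [pow_two, Int.mul_emod, h]⟩
  · right; exact ⟨by omega, by simp [pow_two, Int.mul_emod, h]⟩
  · left; exact ⟨by omega, by simp [pow_two, Int.mul_emod, h]⟩
  · right; exact ⟨by omega, by simp [pow_two, Int.mul_emod, h]⟩

lemma eisen (Y T : ℤ) (h : Y % 2 = T % 2) (h3 : T % 3 = 0) (hY : Y % 3 ≠ 0) :
    ∃ Y' T' : ℤ, Y ^ 2 + 3 * T ^ 2 = Y' ^ 2 + 3 * T' ^ 2 ∧ T' % 3 ≠ 0 := by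
  obtain ⟨k, hk⟩ : ∃ k, Y = T + 2 * k := ⟨(Y - T) / 2, by omega⟩
  refine ⟨2 * T + k, k, by rw [hk]; ring, by omega⟩

lemma rep_L (n : ℤ) (hn : 0 ≤ n) (h : n % 3 = 2) (h4 : n % 4 = 0 ∨ n % 4 = 1) :
    ∃ Y Z T : ℤ, n = Y ^ 2 + Z ^ 2 + 3 * T ^ 2 ∧ T % 3 ≠ 0 := by
  obtain ⟨Y, Z, T, e⟩ := rep_113 n (by omega) h
  by_cases hT : T % 3 = 0
  · have hYZ : Y % 3 ≠ 0 ∧ Z % 3 ≠ 0 := by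
      have := sq_mod3 Y
      have := sq_mod3 Z
      omega
    have hpar : Y % 2 = T % 2 ∨ Z % 2 = T % 2 := by
      have := sq_mod4 Y
      have := sq_mod4 Z
      have := sq_mod4 T
      omega
    rcases hpar with hp | hp
    · obtain ⟨Y', T', e1, e2⟩ := eisen Y T hp hT hYZ.1
      exact ⟨Y', Z, T', by linarith, e2⟩
    · obtain ⟨Z', T', e1, e2⟩ := eisen Z T hp hT hYZ.2
      exact ⟨Y, Z', T', by linarith, e2⟩
  · exact ⟨Y, Z, T, e, hT⟩

lemma norm_sign (Y : ℤ) (h : Y % 3 ≠ 0) : ∃ y : ℤ, (3 * y - 1) ^ 2 = Y ^ 2 := by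
  by_cases h1 : Y % 3 = 1
  · obtain ⟨k, rfl⟩ : ∃ k, Y = 3 * k + 1 := ⟨Y / 3, by omega⟩
    exact ⟨-k, by ring⟩
  · obtain ⟨k, rfl⟩ : ∃ k, Y = 3 * k - 1 := ⟨(Y + 1) / 3, by omega⟩
    exact ⟨k, rfl⟩

lemma finish (α N x Y Z T : ℤ) (e : 3 * N + 5 = 3 * (α * x ^ 2) + Y ^ 2 + Z ^ 2 + 3 * T ^ 2) (hT : T % 3 ≠ 0) :
    ∃ x y z t : ℤ,
        α * x ^ 2 + (3 * y ^ 2 - 2 * y) + (3 * z ^ 2 - 2 * z) +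
          3 * (3 * t ^ 2 - 2 * t) = N := by
  have hYZ : Y % 3 ≠ 0 ∧ Z % 3 ≠ 0 := by
    have := sq_mod3 Y
    have := sq_mod3 Z
    omega
  obtain ⟨y, hy⟩ := norm_sign Y hYZ.1
  obtain ⟨z, hz⟩ := norm_sign Z hYZ.2
  obtain ⟨t, ht⟩ := norm_sign T hT
  refine ⟨x, y, z, t, ?_⟩
  rw [← hy, ← hz, ← ht] at e
  linarith

lemma rep_even (n : ℤ) (hn : 0 ≤ n) (h : n % 3 = 2) (h4 : n % 4 = 0 ∨ n % 4 = 2) :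
    ∃ Y Z X : ℤ, n = Y ^ 2 + Z ^ 2 + 12 * X ^ 2 := by
  obtain ⟨Y, Z, T, e⟩ := rep_113 n (by omega) h
  by_cases hT : T % 2 = 0
  · obtain ⟨k, rfl⟩ : ∃ k, T = 2 * k := ⟨T / 2, by omega⟩
    exact ⟨Y, Z, k, by rw [e]; ring⟩
  · have aux : ∀ Y : ℤ, Y % 2 = 1 → ∃ Y' k : ℤ, Y ^ 2 + 3 * T ^ 2 = Y' ^ 2 + 12 * k ^ 2 := by
      intro Y hY
      by_cases h : (Y - T) % 4 = 0
      · obtain ⟨k, hk⟩ : ∃ k, Y = T + 4 * k := ⟨(Y - T) / 4, by omega⟩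
        exact ⟨2 * T + 2 * k, k, by rw [hk]; ring⟩
      · obtain ⟨k, hk⟩ : ∃ k, Y = -T + 4 * k := ⟨(Y + T) / 4, by omega⟩
        exact ⟨2 * T - 2 * k, k, by rw [hk]; ring⟩
    have hpar : Y % 2 = 1 ∨ Z % 2 = 1 := by
      have := sq_mod4 Y
      have := sq_mod4 Z
      have := sq_mod4 T
      omega
    rcases hpar with hp | hp
    · obtain ⟨Y', k, e1⟩ := aux Y hp
      exact ⟨Y', Z, k, by linarith⟩
    · obtain ⟨Z', k, e1⟩ := aux Z hp
      exact ⟨Y, Z', k, by linarith⟩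

lemma case_four (N : ℤ) (hN : 0 ≤ N) : ∃ x y z t : ℤ,
    4 * x ^ 2 + (3 * y ^ 2 - 2 * y) + (3 * z ^ 2 - 2 * z) + 3 * (3 * t ^ 2 - 2 * t) = N := by
  by_cases hs : N ≤ 2
  · interval_cases N
    · exact ⟨0, 0, 0, 0, by norm_num⟩
    · exact ⟨0, 1, 0, 0, by norm_num⟩
    · exact ⟨0, 1, 1, 0, by norm_num⟩
  · by_cases hp : N % 2 = 0
    · obtain ⟨Y, Z, X, e⟩ := rep_even (3 * N + 5 - 3) (by omega) (by omega) (by omega)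
      exact finish 4 N X Y Z 1 (by linarith) (by norm_num)
    · obtain ⟨Y, Z, X, e⟩ := rep_even (3 * N + 5 - 12) (by omega) (by omega) (by omega)
      exact finish 4 N X Y Z 2 (by linarith) (by norm_num)

lemma case_six (N : ℤ) (hN : 0 ≤ N) : ∃ x y z t : ℤ,
    6 * x ^ 2 + (3 * y ^ 2 - 2 * y) + (3 * z ^ 2 - 2 * z) + 3 * (3 * t ^ 2 - 2 * t) = N := by
  by_cases hs : N ≤ 4
  · interval_cases N
    · exact ⟨0, 0, 0, 0, by norm_num⟩
    · exact ⟨0, 1, 0, 0, by norm_num⟩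
    · exact ⟨0, 1, 1, 0, by norm_num⟩
    · exact ⟨0, 0, 0, 1, by norm_num⟩
    · exact ⟨0, 1, 0, 1, by norm_num⟩
  · by_cases hp : (3 * N + 5) % 4 = 0 ∨ (3 * N + 5) % 4 = 1
    · obtain ⟨Y, Z, T, e, hT⟩ := rep_L (3 * N + 5) (by omega) (by omega) hp
      exact finish 6 N 0 Y Z T (by linarith) hT
    · obtain ⟨Y, Z, T, e, hT⟩ := rep_L (3 * N + 5 - 18) (by omega) (by omega)
        (by have : N % 4 = 0 ∨ N % 4 = 1 ∨ N % 4 = 2 ∨ N % 4 = 3 := by omega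
            rcases this with h | h | h | h <;> omega)
      exact finish 6 N 1 Y Z T (by linarith) hT

lemma three_sq_div (m : ℤ) (hm : 0 < m) (h4 : m % 4 = 1 ∨ m % 4 = 2) (h3 : m % 3 = 1) :
    ∃ p q a : ℤ, m = p ^ 2 + q ^ 2 + 9 * a ^ 2 := by
  obtain ⟨x, y, z, e⟩ := three_sq m hm h4
  have hx := sq_mod3 x
  have hy := sq_mod3 y
  have hz := sq_mod3 z
  have : x % 3 = 0 ∨ y % 3 = 0 := by omega
  rcases this with h | h
  · obtain ⟨k, rfl⟩ : ∃ k, x = 3 * k := ⟨x / 3, by omega⟩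
    exact ⟨y, z, k, by rw [e]; ring⟩
  · obtain ⟨k, rfl⟩ : ∃ k, y = 3 * k := ⟨y / 3, by omega⟩
    exact ⟨x, z, k, by rw [e]; ring⟩

lemma case_five_aux (N m b : ℤ) (hm : 0 < m) (h4 : m % 4 = 1 ∨ m % 4 = 2) (h3 : m % 3 = 1)
    (hb : b % 3 ≠ 0) (e : 3 * N + 5 = 2 * m + 90 * b ^ 2) : ∃ x y z t : ℤ,
    5 * x ^ 2 + (3 * y ^ 2 - 2 * y) + (3 * z ^ 2 - 2 * z) + 3 * (3 * t ^ 2 - 2 * t) = N := by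
  obtain ⟨p, q, a, e2⟩ := three_sq_div m hm h4 h3
  by_cases ha : (a + 5 * b) % 3 = 0
  · exact finish 5 N (-a - b) (p + q) (p - q) (-a + 5 * b) (by rw [e, e2]; ring) (by omega)
  · exact finish 5 N (a - b) (p + q) (p - q) (a + 5 * b) (by rw [e, e2]; ring) ha

lemma case_five_small (i : ℤ) (h0 : 0 ≤ i) (h1 : i < 30) : ∃ x y z t : ℤ,
    5 * x ^ 2 + (3 * y ^ 2 - 2 * y) + (3 * z ^ 2 - 2 * z) + 3 * (3 * t ^ 2 - 2 * t) = 4 * i + 3 := by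
  interval_cases i
  · exact ⟨0, 0, 0, 1, by norm_num⟩
  · exact ⟨1, 1, 1, 0, by norm_num⟩
  · exact ⟨0, 0, 2, 1, by norm_num⟩
  · exact ⟨0, 0, 0, -1, by norm_num⟩
  · exact ⟨0, -2, 0, 1, by norm_num⟩
  · exact ⟨0, 0, 2, -1, by norm_num⟩
  · exact ⟨0, -2, 2, 1, by norm_num⟩
  · exact ⟨0, -2, 0, -1, by norm_num⟩
  · exact ⟨2, 0, 0, -1, by norm_num⟩
  · exact ⟨0, -2, 2, -1, by norm_num⟩
  · exact ⟨0, 0, 4, 1, by norm_num⟩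
  · exact ⟨0, -2, -2, -1, by norm_num⟩
  · exact ⟨2, -2, 0, -1, by norm_num⟩
  · exact ⟨0, 0, 4, -1, by norm_num⟩
  · exact ⟨0, -4, 0, 1, by norm_num⟩
  · exact ⟨0, 0, 0, 3, by norm_num⟩
  · exact ⟨0, -4, 2, 1, by norm_num⟩
  · exact ⟨0, -4, 0, -1, by norm_num⟩
  · exact ⟨0, -4, -2, 1, by norm_num⟩
  · exact ⟨0, -2, 0, 3, by norm_num⟩
  · exact ⟨2, 0, 0, 3, by norm_num⟩
  · exact ⟨0, -4, -2, -1, by norm_num⟩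
  · exact ⟨1, -5, 1, 0, by norm_num⟩
  · exact ⟨4, 0, 0, -1, by norm_num⟩
  · exact ⟨0, 0, 0, -3, by norm_num⟩
  · exact ⟨0, 0, 4, 3, by norm_num⟩
  · exact ⟨0, 0, 2, -3, by norm_num⟩
  · exact ⟨0, 0, 6, -1, by norm_num⟩
  · exact ⟨0, -2, 0, -3, by norm_num⟩
  · exact ⟨2, 0, 0, -3, by norm_num⟩

lemma case_five (N : ℤ) (hN : 0 ≤ N) : ∃ x y z t : ℤ,
    5 * x ^ 2 + (3 * y ^ 2 - 2 * y) + (3 * z ^ 2 - 2 * z) + 3 * (3 * t ^ 2 - 2 * t) = N := by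
  by_cases h3 : N % 4 = 3
  · obtain ⟨i, rfl⟩ : ∃ i, N = 4 * i + 3 := ⟨N / 4, by omega⟩
    by_cases hs : i < 30
    · exact case_five_small i (by omega) hs
    · by_cases hp : i % 2 = 0
      · exact case_five_aux _ (6 * i + 7 - 45) 1 (by omega) (by omega) (by omega) (by norm_num) (by ring)
      · exact case_five_aux _ (6 * i + 7 - 180) 2 (by omega) (by omega) (by omega) (by norm_num) (by ring)
  · by_cases h2 : N % 4 = 2
    · by_cases hs : N = 2
      · exact ⟨0, 1, 1, 0, by rw [hs]; norm_num⟩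
      · obtain ⟨Y, Z, T, e, hT⟩ := rep_L (3 * N + 5 - 15) (by omega) (by omega) (by omega)
        exact finish 5 N 1 Y Z T (by linarith) hT
    · obtain ⟨Y, Z, T, e, hT⟩ := rep_L (3 * N + 5) (by omega) (by omega)
        (by have : N % 4 = 0 ∨ N % 4 = 1 := by omega
            rcases this with h | h <;> omega)
      exact finish 5 N 0 Y Z T (by linarith) hT

theorem universal_case_4_31 :
    ∀ α : ℤ, 4 ≤ α → α ≤ 6 → ∀ N : ℤ, 0 ≤ N →
      ∃ x y z t : ℤ,
        α * x ^ 2 + (3 * y ^ 2 - 2 * y) + (3 * z ^ 2 - 2 * z) +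
          3 * (3 * t ^ 2 - 2 * t) = N := by
  intro α h4 h6 N hN
  interval_cases α
  · exact case_four N hN
  · exact case_five N hN
  · exact case_six N hN
end

section
/- For every integer α with 5 ≤ α ≤ 9 and every nonnegative integer N, the equation αx² + (3y² − 2y) + 2(3z² − 2z) + 3(3t² − 2t) = N has an integer solution in ℤ⁴. That is, the quaternary mixed sums αx²+P₈(y)+2P₈(z)+3P₈(t) for 5 ≤ α ≤ 9 are universal. -/
def S3 (n : ℤ) : Prop := ∃ u v w : ℤ, n = u ^ 2 + v ^ 2 + w ^ 2

lemma shift_exists (a f : ℤ) (ha : 0 < a) : ∃ k : ℤ, -a ≤ 2 * (f + k * a) ∧ 2 * (f + k * a) ≤ a := by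
  refine ⟨-((2 * f + a) / (2 * a)), ?_⟩
  have h1 := Int.emod_add_mul_ediv (2 * f + a) (2 * a)
  have h2 := Int.emod_nonneg (2 * f + a) (show 2 * a ≠ 0 by omega)
  have h3 := Int.emod_lt_of_pos (2 * f + a) (show 0 < 2 * a by omega)
  constructor <;> nlinarith

lemma red_small (a b f g A : ℤ) (ha : 0 < a) (hA : 0 < A) (h : a * b - f ^ 2 = A)
    (h1 : -a ≤ 2 * f) (h2 : 2 * f ≤ a) (hg : 4 * A < 3 * a ^ 2) : 0 < b ∧ b < a := by
  have hf : 4 * f ^ 2 ≤ a ^ 2 := by nlinarith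
  constructor
  · by_contra hb
    push Not at hb
    nlinarith
  · by_contra hb
    push Not at hb
    nlinarith

lemma red (m : ℕ) : ∀ a b c d e f : ℤ, 0 < a → 0 < a * b - f ^ 2 →
    a * b * c + 2 * d * e * f - a * d ^ 2 - b * e ^ 2 - c * f ^ 2 = 1 →
    a + (a * b - f ^ 2) ≤ m → ∀ x y z : ℤ,
    S3 (a * x ^ 2 + b * y ^ 2 + c * z ^ 2 + 2 * d * y * z + 2 * e * x * z + 2 * f * x * y) := by
  induction m with
  | zero => intro a b c d e f h1 h2 h3 h4; push_cast at h4; omega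
  | succ m ih =>
    intro a b c d e f h1 h2 h3 h4 x y z
    push_cast at h4
    by_cases hA : 4 * (a * b - f ^ 2) < 3 * a ^ 2
    · obtain ⟨k, k1, k2⟩ := shift_exists a f h1
      have hm : a * (b + 2 * k * f + k ^ 2 * a) - (f + k * a) ^ 2 = a * b - f ^ 2 := by ring
      obtain ⟨hb, hb'⟩ := red_small a (b + 2 * k * f + k ^ 2 * a) (f + k * a) 0 (a * b - f ^ 2) h1 h2
        hm k1 k2 hA
      have := ih (b + 2 * k * f + k ^ 2 * a) a c e (d + k * e) (f + k * a) hb (by linarith)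
        (by rw [← h3]; ring) (by linarith) y (x - k * y) z
      convert this using 1
      ring
    · by_cases hB : 4 * a < 3 * (a * b - f ^ 2) ^ 2
      · obtain ⟨k, k1, k2⟩ := shift_exists (a * b - f ^ 2) (a * d - e * f) h2
        have hm : (a * b - f ^ 2) * (a * (c + 2 * k * d + k ^ 2 * b) - (e + k * f) ^ 2)
           - ((a * d - e * f) + k * (a * b - f ^ 2)) ^ 2 = a := by
          linear_combination a * h3
        obtain ⟨hb, hb'⟩ := red_small (a * b - f ^ 2) _ _ 0 a h2 h1 hm k1 k2 hB
        have := ih a (c + 2 * k * d + k ^ 2 * b) b (d + k * b) f (e + k * f) h1 hb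
          (by rw [← h3]; ring) (by linarith) x z (y - k * z)
        convert this using 1
        ring
      · push Not at hA hB
        have h5 : a * b - f ^ 2 = 1 ∧ a = 1 := by
          generalize a * b - f ^ 2 = A at *
          rcases le_total a A with h | h
          · have : A ≤ 1 := by nlinarith
            omega
          · have : a ≤ 1 := by nlinarith
            omega
        obtain ⟨h5, rfl⟩ := h5
        have hb : b = f ^ 2 + 1 := by linarith
        subst hb
        have hc : c = e ^ 2 + (d - e * f) ^ 2 + 1 := by linear_combination h3
        subst hc
        exact ⟨x + f * y + e * z, y + (d - e * f) * z, z, by ring⟩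

lemma three_sq_of (n d q s : ℤ) (hd : 0 < d) (hq : 0 < q) (hdn : q = d * n - 1)
    (hs : q ∣ s ^ 2 + d) : S3 n := by
  obtain ⟨t, ht⟩ := hs
  have ht0 : 0 < t := by
    by_contra h
    push Not at h
    nlinarith [sq_nonneg s]
  have := red (t + (t * q - s ^ 2)).toNat t q n 0 1 s ht0 (by linarith)
    (by linear_combination -(n * ht) - hdn) (by
      have : 0 < t * q - s ^ 2 := by linarith
      omega) 0 0 1
  convert this using 1
  ring

lemma exists_sq_dvd (p : ℕ) (hp : p.Prime) (d : ℤ) (h : jacobiSym (-d) p = 1) :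
    ∃ s : ℤ, (p : ℤ) ∣ s ^ 2 + d := by
  haveI : Fact p.Prime := ⟨hp⟩
  obtain ⟨r, hr⟩ := ZMod.isSquare_of_jacobiSym_eq_one h
  obtain ⟨s, rfl⟩ := ZMod.intCast_surjective r
  refine ⟨s, ?_⟩
  rw [← ZMod.intCast_zmod_eq_zero_iff_dvd]
  push_cast at hr ⊢
  rw [sq, ← hr]; ring

lemma s3_two (n : ℕ) (hn : n % 4 = 2) : S3 n := by
  have hc : (n - 1).Coprime (4 * n) := by
    apply Nat.Coprime.mul_right
    · have : Nat.Coprime (n - 1) 2 := by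
        rw [Nat.coprime_two_right, Nat.odd_iff]; omega
      exact Nat.Coprime.pow_right 2 this
    · have := Nat.coprime_self_sub_right (show 1 ≤ n by omega)
      exact (this.2 (by simp)).symm
  obtain ⟨p, hpn, hp, hm⟩ := Nat.forall_exists_prime_gt_and_modEq n (show 4 * n ≠ 0 by omega) hc
  obtain ⟨j, hj⟩ := (Nat.modEq_iff_dvd' (by omega)).1 hm.symm
  have hj' : p = (4 * j + 1) * n - 1 := by
    have : p = 4 * n * j + (n - 1) := by omega
    rw [this, ← Nat.add_sub_assoc (by omega)]; congr 1; ring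
  have hj2 : p + 1 = (4 * j + 1) * n := by
    have : 0 < (4 * j + 1) * n := by apply Nat.mul_pos <;> omega
    omega
  have hp4 : p % 4 = 1 := by
    have : p = 4 * (n * j) + (n - 1) := by rw [← mul_assoc]; omega
    omega
  have hpo : Odd p := by rw [Nat.odd_iff]; omega
  have hdo : Odd (4 * j + 1) := by rw [Nat.odd_iff]; omega
  have hjac : jacobiSym (-((4 * j + 1 : ℕ) : ℤ)) p = 1 := by
    rw [jacobiSym.neg _ hpo, ZMod.χ₄_nat_one_mod_four hp4, one_mul,
      jacobiSym.quadratic_reciprocity_one_mod_four (by omega) hpo]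
    have : jacobiSym p (4 * j + 1) = jacobiSym (-1) (4 * j + 1) := by
      apply jacobiSym.mod_left'
      apply Int.ModEq.symm
      rw [Int.modEq_iff_dvd]
      exact ⟨n, by have : ((p + 1 : ℕ) : ℤ) = ((4 * j + 1) * n : ℕ) := by rw [hj2]
                   push_cast at this ⊢; linarith⟩
    rw [this, jacobiSym.at_neg_one hdo, ZMod.χ₄_nat_one_mod_four (by omega)]
  obtain ⟨s, hs⟩ := exists_sq_dvd p hp _ hjac
  refine three_sq_of n ((4 * j + 1 : ℕ) : ℤ) p s (by positivity) (by exact_mod_cast hp.pos) ?_ hs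
  have : ((p + 1 : ℕ) : ℤ) = ((4 * j + 1) * n : ℕ) := by rw [hj2]
  push_cast at this ⊢; linarith

lemma s3_odd_aux (n c : ℕ) (hn : n % 2 = 1) (hc : c = 1 ∨ c = 3)
    (h4 : (c * n - 1) / 2 % 2 = 1) (hcn : c * n % 2 = 1) (h3 : 3 ≤ c * n)
    (hjac : ∀ p d : ℕ, p % 4 = (c * n - 1) / 2 % 4 → d % 8 = c → 2 * p + 1 = d * n →
      jacobiSym (-(d : ℤ)) p = 1) : S3 n := by
  have h2 : 2 * ((c * n - 1) / 2) + 1 = c * n := by omega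
  have hco : ((c * n - 1) / 2).Coprime (4 * n) := by
    apply Nat.Coprime.mul_right
    · have : Nat.Coprime ((c * n - 1) / 2) 2 := by
        rw [Nat.coprime_two_right, Nat.odd_iff]; omega
      exact Nat.Coprime.pow_right 2 this
    · generalize (c * n - 1) / 2 = k at *
      rw [← Nat.isCoprime_iff_coprime]
      refine ⟨-2, c, ?_⟩
      have : ((2 * k + 1 : ℕ) : ℤ) = (c * n : ℕ) := by rw [h2]
      push_cast at this; linarith
  obtain ⟨p, hpn, hp, hm⟩ := Nat.forall_exists_prime_gt_and_modEq ((c * n - 1) / 2)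
    (show 4 * n ≠ 0 by omega) hco
  obtain ⟨j, hj⟩ := (Nat.modEq_iff_dvd' (by omega)).1 hm.symm
  have hj1 : p = 4 * (n * j) + (c * n - 1) / 2 := by rw [← mul_assoc]; omega
  have hj2 : 2 * p + 1 = (8 * j + c) * n := by
    have : 2 * p + 1 = 8 * (n * j) + c * n := by omega
    rw [this]; ring
  have hpo : p % 2 = 1 := by omega
  obtain ⟨s, hs⟩ := exists_sq_dvd p hp _ (hjac p (8 * j + c) (by omega) (by omega) hj2)
  have hz : 2 * (p : ℤ) + 1 = ((8 * j + c : ℕ) : ℤ) * n := by exact_mod_cast hj2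
  have hd1 : ((8 * j + c : ℕ) : ℤ) % 2 = 1 := by omega
  have hd0 : 0 < ((8 * j + c : ℕ) : ℤ) := by omega
  generalize ((8 * j + c : ℕ) : ℤ) = d at *
  have hs' : ∃ s : ℤ, 2 * (p : ℤ) ∣ s ^ 2 + d := by
    have key : ∀ s : ℤ, s % 2 = 1 → (p : ℤ) ∣ s ^ 2 + d → 2 * (p : ℤ) ∣ s ^ 2 + d := by
      intro s hs1 hs
      apply IsCoprime.mul_dvd _ _ hs
      · rw [Int.isCoprime_iff_gcd_eq_one]
        have : Nat.Coprime 2 p := by rw [Nat.coprime_two_left, Nat.odd_iff]; exact hpo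
        exact this
      · have : s ^ 2 % 2 = 1 := by rw [pow_two, Int.mul_emod, hs1]; rfl
        omega
    rcases Int.emod_two_eq_zero_or_one s with h | h
    · refine ⟨s + p, key _ (by omega) ?_⟩
      have : (s + p) ^ 2 + d = s ^ 2 + d + p * (2 * s + p) := by ring
      rw [this]
      exact dvd_add hs (dvd_mul_right _ _)
    · exact ⟨s, key s h hs⟩
  obtain ⟨s, hs⟩ := hs'
  have := hp.pos
  exact three_sq_of n d (2 * p) s hd0 (by omega) (by linarith) hs

lemma jac_aux (n p d : ℕ) (hd : Odd d) (h : 2 * p + 1 = d * n) :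
    jacobiSym 2 d * jacobiSym p d = jacobiSym (-1) d := by
  rw [← jacobiSym.mul_left]
  apply jacobiSym.mod_left'
  apply Int.ModEq.symm
  rw [Int.modEq_iff_dvd]
  exact ⟨n, by have : ((2 * p + 1 : ℕ) : ℤ) = (d * n : ℕ) := by rw [h]
               push_cast at this ⊢; linarith⟩

lemma s3_odd (n : ℕ) (hn : n % 8 = 1 ∨ n % 8 = 3 ∨ n % 8 = 5) : S3 n := by
  rcases hn with hn | hn | hn
  · refine s3_odd_aux n 3 (by omega) (by simp) (by omega) (by omega) (by omega) ?_
    intro p d hp hd h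
    have hp4 : p % 4 = 1 := by omega
    have hpo : Odd p := by rw [Nat.odd_iff]; omega
    have hdo : Odd d := by rw [Nat.odd_iff]; omega
    have hj := jac_aux n p d hdo h
    rw [jacobiSym.at_two hdo, jacobiSym.at_neg_one hdo, ZMod.χ₄_nat_three_mod_four (by omega),
      ZMod.χ₈_nat_mod_eight, hd] at hj
    rw [jacobiSym.neg _ hpo, ZMod.χ₄_nat_one_mod_four hp4, one_mul,
      jacobiSym.quadratic_reciprocity_one_mod_four' hdo hp4]
    have : ZMod.χ₈ ((3 : ℕ) : ZMod 8) = -1 := by decide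
    rw [this] at hj; linarith
  · by_cases h3 : n = 3
    · subst h3; exact ⟨1, 1, 1, by norm_num⟩
    refine s3_odd_aux n 1 (by omega) (by simp) (by omega) (by omega) (by omega) ?_
    intro p d hp hd h
    have hp4 : p % 4 = 1 := by omega
    have hpo : Odd p := by rw [Nat.odd_iff]; omega
    have hdo : Odd d := by rw [Nat.odd_iff]; omega
    have hj := jac_aux n p d hdo h
    rw [jacobiSym.at_two hdo, jacobiSym.at_neg_one hdo, ZMod.χ₄_nat_one_mod_four (by omega),
      ZMod.χ₈_nat_mod_eight, hd] at hj
    rw [jacobiSym.neg _ hpo, ZMod.χ₄_nat_one_mod_four hp4, one_mul,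
      jacobiSym.quadratic_reciprocity_one_mod_four' hdo hp4]
    have : ZMod.χ₈ ((1 : ℕ) : ZMod 8) = 1 := by decide
    rw [this] at hj; linarith
  · refine s3_odd_aux n 3 (by omega) (by simp) (by omega) (by omega) (by omega) ?_
    intro p d hp hd h
    have hp4 : p % 4 = 3 := by omega
    have hpo : Odd p := by rw [Nat.odd_iff]; omega
    have hdo : Odd d := by rw [Nat.odd_iff]; omega
    have hj := jac_aux n p d hdo h
    rw [jacobiSym.at_two hdo, jacobiSym.at_neg_one hdo, ZMod.χ₄_nat_three_mod_four (by omega),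
      ZMod.χ₈_nat_mod_eight, hd] at hj
    rw [jacobiSym.neg _ hpo, ZMod.χ₄_nat_three_mod_four hp4,
      jacobiSym.quadratic_reciprocity_three_mod_four (by omega) hp4]
    have : ZMod.χ₈ ((3 : ℕ) : ZMod 8) = -1 := by decide
    rw [this] at hj; linarith

lemma s3_main (n : ℤ) (h0 : 0 ≤ n) (h4 : n % 4 ≠ 0) (h8 : n % 8 ≠ 7) : S3 n := by
  lift n to ℕ using h0
  by_cases h : n % 4 = 2
  · exact s3_two n h
  · exact s3_odd n (by omega)

def RR (n : ℤ) : Prop := ∃ A T B : ℤ, n = A ^ 2 + T ^ 2 + 2 * B ^ 2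

def GG (n : ℤ) : Prop := ∃ A T B : ℤ, n = A ^ 2 + T ^ 2 + 2 * B ^ 2 ∧ T % 3 ≠ 0 ∧
  (A % 3 ≠ 0 ∨ B % 3 ≠ 0)

lemma sq3 (v : ℤ) : (v % 3 = 0 ∧ v ^ 2 % 9 = 0) ∨ (v % 3 ≠ 0 ∧ v ^ 2 % 3 = 1) := by
  have h : v % 3 = 0 ∨ v % 3 = 1 ∨ v % 3 = 2 := by omega
  rcases h with h | h | h
  · left
    obtain ⟨k, rfl⟩ : ∃ k, v = 3 * k := ⟨v / 3, by omega⟩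
    have : (3 * k) ^ 2 = 9 * k ^ 2 := by ring
    omega
  · right
    refine ⟨by omega, ?_⟩
    rw [pow_two, Int.mul_emod, h]; rfl
  · right
    refine ⟨by omega, ?_⟩
    rw [pow_two, Int.mul_emod, h]; rfl

lemma sq2 (v : ℤ) : (v % 2 = 0 ∧ v ^ 2 % 4 = 0) ∨ (v % 2 = 1 ∧ v ^ 2 % 4 = 1) := by
  rcases Int.emod_two_eq_zero_or_one v with h | h
  · left
    obtain ⟨k, rfl⟩ : ∃ k, v = 2 * k := ⟨v / 2, by omega⟩
    have : (2 * k) ^ 2 = 4 * k ^ 2 := by ring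
    omega
  · right
    obtain ⟨k, rfl⟩ : ∃ k, v = 2 * k + 1 := ⟨v / 2, by omega⟩
    have : (2 * k + 1) ^ 2 = 4 * (k ^ 2 + k) + 1 := by ring
    omega

lemma norm_one (v : ℤ) (h : v % 3 ≠ 0) : ∃ y : ℤ, v ^ 2 = (3 * y + 1) ^ 2 := by
  have h : v % 3 = 1 ∨ v % 3 = 2 := by omega
  rcases h with h | h
  · exact ⟨v / 3, by congr 1; omega⟩
  · refine ⟨(-v) / 3, ?_⟩
    rw [← neg_sq v]; congr 1; omega

lemma fin_lemma (α N x : ℤ) (h : GG (N + 2 - α * x ^ 2)) : ∃ x y z t : ℤ,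
        α * x ^ 2 + (3 * y ^ 2 - 2 * y) + 2 * (3 * z ^ 2 - 2 * z) +
          3 * (3 * t ^ 2 - 2 * t) = N := by
  obtain ⟨A, T, B, h, hT, hAB⟩ := h
  obtain ⟨B, h, hAB⟩ : ∃ B', N + 2 - α * x ^ 2 = A ^ 2 + T ^ 2 + 2 * B' ^ 2 ∧ (A - B') % 3 ≠ 0 := by
    by_cases hh : (A - B) % 3 = 0
    · exact ⟨-B, by rw [h]; ring, by omega⟩
    · exact ⟨B, h, hh⟩
  obtain ⟨y, hy⟩ := norm_one (A + 2 * B) (by omega)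
  obtain ⟨z, hz⟩ := norm_one (A - B) hAB
  obtain ⟨t, ht⟩ := norm_one T hT
  refine ⟨x, -y, -z, -t, ?_⟩
  have : 3 * (α * x ^ 2 + (3 * (-y) ^ 2 - 2 * -y) + 2 * (3 * (-z) ^ 2 - 2 * -z) +
          3 * (3 * (-t) ^ 2 - 2 * -t)) = 3 * N := by
    linear_combination (-3) * h - hy - 2 * hz - 3 * ht
  linarith

lemma conv_prim (t b : ℤ) (h : ¬ (t % 3 = 0 ∧ b % 3 = 0)) :
    ∃ r s : ℤ, 9 * (t ^ 2 + 2 * b ^ 2) = r ^ 2 + 2 * s ^ 2 ∧ r % 3 ≠ 0 ∧ s % 3 ≠ 0 := by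
  by_cases h1 : (t + b) % 3 = 0
  · exact ⟨-t + 4 * b, 2 * t + b, by ring, by omega, by omega⟩
  · exact ⟨-t - 4 * b, 2 * t - b, by ring, by omega, by omega⟩

lemma conv_aux (m : ℕ) : ∀ t b : ℤ, t.natAbs + b.natAbs ≤ m → ¬ (t = 0 ∧ b = 0) →
    ∃ r s : ℤ, 9 * (t ^ 2 + 2 * b ^ 2) = r ^ 2 + 2 * s ^ 2 ∧ r % 3 ≠ 0 ∧ s % 3 ≠ 0 := by
  induction m with
  | zero => intro t b h h'; omega
  | succ m ih =>
    intro t b h h'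
    by_cases hp : t % 3 = 0 ∧ b % 3 = 0
    · obtain ⟨t', rfl⟩ : ∃ k, t = 3 * k := ⟨t / 3, by omega⟩
      obtain ⟨b', rfl⟩ : ∃ k, b = 3 * k := ⟨b / 3, by omega⟩
      obtain ⟨r, s, h1, h2, h3⟩ := ih t' b' (by omega) (by omega)
      obtain ⟨r', s', h4, h5, h6⟩ := conv_prim r s (by omega)
      exact ⟨r', s', by rw [← h4, ← h1]; ring, h5, h6⟩
    · exact conv_prim t b hp

lemma conv (t b : ℤ) (h : ¬ (t = 0 ∧ b = 0)) (ht : t % 3 = 0) (hb : b % 3 = 0) :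
    ∃ r s : ℤ, t ^ 2 + 2 * b ^ 2 = r ^ 2 + 2 * s ^ 2 ∧ r % 3 ≠ 0 ∧ s % 3 ≠ 0 := by
  obtain ⟨t', rfl⟩ : ∃ k, t = 3 * k := ⟨t / 3, by omega⟩
  obtain ⟨b', rfl⟩ : ∃ k, b = 3 * k := ⟨b / 3, by omega⟩
  obtain ⟨r, s, h1, h2⟩ := conv_aux _ t' b' le_rfl (by omega)
  exact ⟨r, s, by rw [← h1]; ring, h2⟩

lemma good0 (n : ℤ) (h3 : n % 3 = 0) (h0 : n ≠ 0) (h : RR n) : GG n := by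
  obtain ⟨A, T, B, h⟩ := h
  have key : ∀ A T : ℤ, n = A ^ 2 + T ^ 2 + 2 * B ^ 2 → T ≠ 0 ∨ B ≠ 0 → T % 3 = 0 → B % 3 = 0 →
      GG n := by
    intro A T h h1 h2 h3
    obtain ⟨r, s, h4, h5, h6⟩ := conv T B (by omega) h2 h3
    exact ⟨A, r, s, by linarith, h5, Or.inr h6⟩
  rcases sq3 A with ⟨a1, a2⟩ | ⟨a1, a2⟩ <;> rcases sq3 T with ⟨t1, t2⟩ | ⟨t1, t2⟩ <;>
    rcases sq3 B with ⟨b1, b2⟩ | ⟨b1, b2⟩ <;> try omega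
  · by_cases hh : T = 0 ∧ B = 0
    · refine key T A (by linarith) ?_ a1 b1
      left
      rintro rfl
      obtain ⟨rfl, rfl⟩ := hh
      exact h0 (by rw [h]; ring)
    · exact key A T h (by omega) t1 b1
  · exact ⟨A, T, B, h, t1, Or.inr b1⟩
  · exact ⟨T, A, B, by linarith, a1, Or.inr b1⟩

lemma good1_aux (n A T B : ℤ) (h3 : n % 3 = 1) (h : n = A ^ 2 + T ^ 2 + 2 * B ^ 2)
    (h1 : T ≠ 0 ∨ B ≠ 0) (h2 : A ≠ 0 ∨ B ≠ 0) : GG n := by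
  have key : ∀ A T : ℤ, n = A ^ 2 + T ^ 2 + 2 * B ^ 2 → T ≠ 0 ∨ B ≠ 0 → A % 3 ≠ 0 → T % 3 = 0 →
      B % 3 = 0 → GG n := by
    intro A T h h1 h0 h2 h3
    obtain ⟨r, s, h4, h5, h6⟩ := conv T B (by omega) h2 h3
    exact ⟨A, r, s, by linarith, h5, Or.inr h6⟩
  rcases sq3 A with ⟨a1, a2⟩ | ⟨a1, a2⟩ <;> rcases sq3 T with ⟨t1, t2⟩ | ⟨t1, t2⟩ <;>
    rcases sq3 B with ⟨b1, b2⟩ | ⟨b1, b2⟩ <;> try omega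
  · exact key T A (by linarith) h2 t1 a1 b1
  · exact key A T h h1 a1 t1 b1
  · exact ⟨A, T, B, h, t1, Or.inr b1⟩

lemma RR_odd (n : ℤ) (h0 : 0 ≤ n) (h : n % 2 = 1) : RR n := by
  obtain ⟨u, v, w, hs⟩ := s3_main (2 * n) (by omega) (by omega) (by omega)
  have key : ∀ u v w : ℤ, 2 * n = u ^ 2 + v ^ 2 + w ^ 2 → u % 2 = 1 → v % 2 = 1 → w % 2 = 0 →
      RR n := by
    intro u v w hs hu hv hw
    obtain ⟨a, ha⟩ : ∃ k, u + v = 2 * k := ⟨(u + v) / 2, by omega⟩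
    obtain ⟨b, hb⟩ : ∃ k, w = 2 * k := ⟨w / 2, by omega⟩
    refine ⟨a, a - v, b, ?_⟩
    have hu : u = 2 * a - v := by omega
    subst hu hb
    linarith
  rcases sq2 u with ⟨a1, a2⟩ | ⟨a1, a2⟩ <;> rcases sq2 v with ⟨t1, t2⟩ | ⟨t1, t2⟩ <;>
    rcases sq2 w with ⟨b1, b2⟩ | ⟨b1, b2⟩ <;> try omega
  · exact key v w u (by linarith) t1 b1 a1
  · exact key u w v (by linarith) a1 b1 t1
  · exact key u v w (by linarith) a1 t1 b1

lemma RR_even (k : ℤ) (h : S3 k) : RR (2 * k) := by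
  obtain ⟨u, v, w, hs⟩ := h
  exact ⟨u + v, u - v, w, by rw [hs]; ring⟩

lemma nontriv (m : ℕ) : ∀ A : ℤ, 2 ≤ A → A ≤ m → ∃ r s b : ℤ, A ^ 2 = r ^ 2 + s ^ 2 + 2 * b ^ 2 ∧
    (s ≠ 0 ∨ b ≠ 0) ∧ r ≠ 0 := by
  induction m with
  | zero => intro A h1 h2; push_cast at h2; omega
  | succ m ih =>
    intro A h1 h2
    push_cast at h2
    rcases Int.emod_two_eq_zero_or_one A with h | h
    · obtain ⟨k, rfl⟩ : ∃ k, A = 2 * k := ⟨A / 2, by omega⟩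
      exact ⟨k, k, k, by ring, by omega, by omega⟩
    · have key : ∀ a b c : ℤ, A = a ^ 2 + b ^ 2 + 2 * c ^ 2 → b ≠ 0 →
          ∃ r s b : ℤ, A ^ 2 = r ^ 2 + s ^ 2 + 2 * b ^ 2 ∧ (s ≠ 0 ∨ b ≠ 0) ∧ r ≠ 0 := by
        intro a b c hA hb
        by_cases hac : a = 0 ∧ c = 0
        · obtain ⟨rfl, rfl⟩ := hac
          have hb2 : A = |b| ^ 2 := by rw [sq_abs, hA]; ring
          have hb0 : 0 < |b| := abs_pos.2 hb
          generalize |b| = B at *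
          have hB : 2 ≤ B := by
            by_contra hh
            have : B = 1 := by omega
            subst this
            omega
          obtain ⟨r, s, t, h3, h4, h5⟩ := ih B hB (by nlinarith)
          refine ⟨B * r, B * s, B * t, ?_, ?_, ?_⟩
          · rw [hb2]; linear_combination B ^ 2 * h3
          · rcases h4 with h4 | h4
            · left; exact mul_ne_zero hb0.ne' h4
            · right; exact mul_ne_zero hb0.ne' h4
          · exact mul_ne_zero hb0.ne' h5
        · refine ⟨a ^ 2 - b ^ 2 + 2 * c ^ 2, 2 * (a * b), 2 * (b * c), by rw [hA]; ring, ?_, ?_⟩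
          · by_cases ha : a = 0
            · right
              have : b * c ≠ 0 := mul_ne_zero hb (fun hc => hac ⟨ha, hc⟩)
              omega
            · left
              have : a * b ≠ 0 := mul_ne_zero ha hb
              omega
          · omega
      obtain ⟨a, b, c, hA⟩ := RR_odd A (by omega) h
      by_cases hb : b = 0
      · by_cases ha : a = 0
        · subst ha hb
          omega
        · exact key b a c (by linarith) ha
      · exact key a b c hA hb

lemma good1 (n : ℤ) (h3 : n % 3 = 1) (h0 : n ≠ 1) (h : RR n) : GG n := by
  obtain ⟨A, T, B, h⟩ := h
  have key : ∀ A : ℤ, n = A ^ 2 → GG n := by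
    intro A hA
    rw [← sq_abs] at hA
    have hp := abs_nonneg A
    generalize |A| = A at *
    have : 2 ≤ A := by
      by_contra hh
      have : A = 0 ∨ A = 1 := by omega
      rcases this with rfl | rfl <;> omega
    obtain ⟨r, s, b, h1, h2, h4⟩ := nontriv A.toNat A this (by omega)
    exact good1_aux n r s b h3 (by rw [hA, h1]) h2 (Or.inl h4)
  by_cases h1 : T ≠ 0 ∨ B ≠ 0
  · by_cases h2 : A ≠ 0 ∨ B ≠ 0
    · exact good1_aux n A T B h3 h h1 h2
    · push Not at h2
      obtain ⟨rfl, rfl⟩ := h2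
      exact key T (by rw [h]; ring)
  · push Not at h1
    obtain ⟨rfl, rfl⟩ := h1
    exact key A (by rw [h]; ring)

lemma good (n : ℤ) (h2 : 2 ≤ n) (h3 : n % 3 ≠ 2) (h : RR n) : GG n := by
  by_cases h' : n % 3 = 0
  · exact good0 n h' (by omega) h
  · exact good1 n (by omega) (by omega) h

lemma good_odd (n : ℤ) (h2 : 2 ≤ n) (h3 : n % 3 ≠ 2) (h : n % 2 = 1) : GG n :=
  good n h2 h3 (RR_odd n (by omega) h)

lemma good_even (k : ℤ) (h2 : 1 ≤ k) (h3 : (2 * k) % 3 ≠ 2) (h4 : k % 4 ≠ 0) (h8 : k % 8 ≠ 7) :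
    GG (2 * k) :=
  good _ (by omega) h3 (RR_even k (s3_main k (by omega) h4 h8))

def HH (α M : ℤ) : Prop := ∃ x : ℤ, GG (M - α * x ^ 2)

lemma small_dec : (List.range' 5 5).all (fun a => (List.range' 2 89).all fun M =>
    (List.range 3).any fun x => [1, 2, 4, 5, 7, 8].any fun T =>
    ([1, 2, 4].any fun A => (List.range 7).any fun B =>
      Nat.beq M (a * (x * x) + A * A + T * T + 2 * (B * B))) ||
    ([0, 3, 6].any fun A => [1, 2, 4, 5].any fun B =>
      Nat.beq M (a * (x * x) + A * A + T * T + 2 * (B * B)))) = true := by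
  decide +kernel

lemma small (α M : ℤ) (h1 : 5 ≤ α) (h2 : α ≤ 9) (h3 : 2 ≤ M) (h4 : M ≤ 90) : HH α M := by
  lift α to ℕ using (by omega)
  lift M to ℕ using (by omega)
  have h := small_dec
  rw [List.all_eq_true] at h
  have h := h α (by rw [List.mem_range'_1]; omega)
  rw [List.all_eq_true] at h
  have h := h M (by rw [List.mem_range'_1]; omega)
  rw [List.any_eq_true] at h
  obtain ⟨x, -, h⟩ := h
  rw [List.any_eq_true] at h
  obtain ⟨T, hT, h⟩ := h
  have hT : T % 3 ≠ 0 := by simp at hT; omega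
  rw [Bool.or_eq_true, List.any_eq_true, List.any_eq_true] at h
  rcases h with ⟨A, hA, h⟩ | ⟨A, -, h⟩ <;> rw [List.any_eq_true] at h
  · obtain ⟨B, -, h⟩ := h
    have hA : A % 3 ≠ 0 := by simp at hA; omega
    refine ⟨x, A, T, B, ?_, by omega, by omega⟩
    rw [Nat.eq_of_beq_eq_true h]; push_cast; ring
  · obtain ⟨B, hB, h⟩ := h
    have hB : B % 3 ≠ 0 := by simp at hB; omega
    refine ⟨x, A, T, B, ?_, by omega, by omega⟩
    rw [Nat.eq_of_beq_eq_true h]; push_cast; ring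

lemma case5 (M : ℤ) (h : 90 < M) : HH 5 M := by
  have : ((M - 5 * 0 ^ 2) % 3 ≠ 2 ∧ (M - 5 * 0 ^ 2) % 2 = 1) ∨
    ((M - 5 * 1 ^ 2) % 3 ≠ 2 ∧ (M - 5 * 1 ^ 2) % 2 = 1) ∨
    ((M - 5 * 2 ^ 2) % 3 ≠ 2 ∧ (M - 5 * 2 ^ 2) % 2 = 1) ∨
    ((M - 5 * 3 ^ 2) % 3 ≠ 2 ∧ (M - 5 * 3 ^ 2) % 2 = 1) := by omega
  rcases this with ⟨h1, h2⟩ | ⟨h1, h2⟩ | ⟨h1, h2⟩ | ⟨h1, h2⟩ <;>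
    exact ⟨_, good_odd _ (by omega) h1 h2⟩

lemma case7 (M : ℤ) (h : 90 < M) : HH 7 M := by
  have : ((M - 7 * 0 ^ 2) % 3 ≠ 2 ∧ (M - 7 * 0 ^ 2) % 2 = 1) ∨
    ((M - 7 * 1 ^ 2) % 3 ≠ 2 ∧ (M - 7 * 1 ^ 2) % 2 = 1) ∨
    ((M - 7 * 2 ^ 2) % 3 ≠ 2 ∧ (M - 7 * 2 ^ 2) % 2 = 1) ∨
    ((M - 7 * 3 ^ 2) % 3 ≠ 2 ∧ (M - 7 * 3 ^ 2) % 2 = 1) := by omega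
  rcases this with ⟨h1, h2⟩ | ⟨h1, h2⟩ | ⟨h1, h2⟩ | ⟨h1, h2⟩ <;>
    exact ⟨_, good_odd _ (by omega) h1 h2⟩

lemma case9 (M : ℤ) (h : 90 < M) : HH 9 M := by
  by_cases h3 : M % 3 = 2
  · have key : ∀ A T X b : ℤ, M = A ^ 2 + T ^ 2 + X ^ 2 + 18 * b ^ 2 → A % 3 ≠ 0 → T % 3 ≠ 0 →
        X % 3 = 0 → HH 9 M := by
      intro A T X b h hA hT hX
      obtain ⟨x, rfl⟩ : ∃ k, X = 3 * k := ⟨X / 3, by omega⟩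
      exact ⟨x, A, T, 3 * b, by rw [h]; ring, hT, Or.inl hA⟩
    have : ∃ b : ℤ, S3 (M - 18 * b ^ 2) := by
      by_cases h4 : M % 4 = 0 ∨ M % 8 = 7
      · exact ⟨1, s3_main _ (by omega) (by omega) (by omega)⟩
      · exact ⟨0, s3_main _ (by omega) (by omega) (by omega)⟩
    obtain ⟨b, u, v, w, hs⟩ := this
    rcases sq3 u with ⟨a1, a2⟩ | ⟨a1, a2⟩ <;> rcases sq3 v with ⟨t1, t2⟩ | ⟨t1, t2⟩ <;>
      rcases sq3 w with ⟨b1, b2⟩ | ⟨b1, b2⟩ <;> try omega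
    · exact key v w u b (by linarith) t1 b1 a1
    · exact key u w v b (by linarith) a1 b1 t1
    · exact key u v w b (by linarith) a1 t1 b1
  · by_cases h2 : M % 2 = 1
    · exact ⟨0, good_odd _ (by omega) (by omega) (by omega)⟩
    · exact ⟨1, good_odd _ (by omega) (by omega) (by omega)⟩

lemma case8 (m : ℕ) : ∀ M : ℤ, 2 ≤ M → M ≤ m → HH 8 M := by
  induction m with
  | zero => intro M h1 h2; push_cast at h2; omega
  | succ m ih =>
    intro M h0 hm
    by_cases hM : M ≤ 90
    · exact small 8 M (by norm_num) (by norm_num) h0 hM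
    push Not at hM
    push_cast at hm
    by_cases h2 : M % 2 = 1
    · by_cases h3 : M % 3 = 2
      · exact ⟨1, good_odd _ (by omega) (by omega) (by omega)⟩
      · exact ⟨0, good_odd _ (by omega) (by omega) (by omega)⟩
    by_cases h4 : M % 4 = 0
    · obtain ⟨k, rfl⟩ : ∃ k, M = 4 * k := ⟨M / 4, by omega⟩
      obtain ⟨x, A, T, B, h, hT, hA⟩ := ih k (by omega) (by omega)
      exact ⟨2 * x, 2 * A, 2 * T, 2 * B, by linear_combination 4 * h, by omega, by omega⟩
    · obtain ⟨k, rfl⟩ : ∃ k, M = 2 * k := ⟨M / 2, by omega⟩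
      have key : ∀ x : ℤ, 1 ≤ k - 4 * x ^ 2 → (2 * (k - 4 * x ^ 2)) % 3 ≠ 2 →
          (k - 4 * x ^ 2) % 8 ≠ 7 → HH 8 (2 * k) := by
        intro x h1 h2 h3
        have := good_even _ h1 h2 (by omega) h3
        refine ⟨x, ?_⟩
        convert this using 1; ring
      have : ((2 * (k - 4 * 0 ^ 2)) % 3 ≠ 2 ∧ (k - 4 * 0 ^ 2) % 8 ≠ 7) ∨
        ((2 * (k - 4 * 1 ^ 2)) % 3 ≠ 2 ∧ (k - 4 * 1 ^ 2) % 8 ≠ 7) ∨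
        ((2 * (k - 4 * 2 ^ 2)) % 3 ≠ 2 ∧ (k - 4 * 2 ^ 2) % 8 ≠ 7) ∨
        ((2 * (k - 4 * 3 ^ 2)) % 3 ≠ 2 ∧ (k - 4 * 3 ^ 2) % 8 ≠ 7) := by omega
      rcases this with ⟨h1, h2⟩ | ⟨h1, h2⟩ | ⟨h1, h2⟩ | ⟨h1, h2⟩ <;>
        exact key _ (by omega) h1 h2

lemma case6_aux (m : ℤ) (hm : m % 3 = 1) (h : S3 (3 * m)) :
    ∃ A x b : ℤ, m = A ^ 2 + 6 * x ^ 2 + 18 * b ^ 2 ∧ A % 3 ≠ 0 := by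
  obtain ⟨u, v, w, hs⟩ := h
  have hn : u % 3 ≠ 0 ∧ v % 3 ≠ 0 ∧ w % 3 ≠ 0 := by
    rcases sq3 u with ⟨a1, a2⟩ | ⟨a1, a2⟩ <;> rcases sq3 v with ⟨t1, t2⟩ | ⟨t1, t2⟩ <;>
      rcases sq3 w with ⟨b1, b2⟩ | ⟨b1, b2⟩ <;> omega
  obtain ⟨i, hi⟩ := norm_one u hn.1
  obtain ⟨j, hj⟩ := norm_one v hn.2.1
  obtain ⟨k, hk⟩ := norm_one w hn.2.2
  rw [hi, hj, hk] at hs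
  have key : ∀ i j k : ℤ, 3 * m = (3 * i + 1) ^ 2 + (3 * j + 1) ^ 2 + (3 * k + 1) ^ 2 →
      (i - j) % 2 = 0 → ∃ A x b : ℤ, m = A ^ 2 + 6 * x ^ 2 + 18 * b ^ 2 ∧ A % 3 ≠ 0 := by
    intro i j k hs hij
    have hs' : m = 3 * (i ^ 2 + j ^ 2 + k ^ 2) + 2 * (i + j + k) + 1 := by linarith
    have hσ : (i + j + k) % 3 = 0 := by omega
    obtain ⟨x, hx⟩ : ∃ x, i = j + 2 * x := ⟨(i - j) / 2, by omega⟩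
    obtain ⟨b, hb⟩ : ∃ b, k = j + x - 3 * b := ⟨(j + x - k) / 3, by omega⟩
    refine ⟨i + j + k + 1, x, b, ?_, by omega⟩
    rw [hs', hb, hx]; ring
  have : (i - j) % 2 = 0 ∨ (i - k) % 2 = 0 ∨ (j - k) % 2 = 0 := by omega
  rcases this with h | h | h
  · exact key i j k hs h
  · exact key i k j (by linarith) h
  · exact key j k i (by linarith) h

lemma case6 (M : ℤ) (h : 90 < M) : HH 6 M := by
  by_cases h3 : M % 3 = 2
  · have key : ∀ T : ℤ, T % 3 ≠ 0 → (M - T ^ 2) % 3 = 1 → 0 ≤ M - T ^ 2 → (M - T ^ 2) % 4 ≠ 0 →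
        (M - T ^ 2) % 8 ≠ 5 → HH 6 M := by
      intro T hT h1 h0 h4 h8
      obtain ⟨A, x, b, hm, hA⟩ := case6_aux (M - T ^ 2) h1 (s3_main _ (by omega) (by omega) (by omega))
      exact ⟨x, A, T, 3 * b, by linear_combination hm, hT, Or.inl hA⟩
    have : ((M - 1 ^ 2) % 4 ≠ 0 ∧ (M - 1 ^ 2) % 8 ≠ 5) ∨ ((M - 2 ^ 2) % 4 ≠ 0 ∧ (M - 2 ^ 2) % 8 ≠ 5)
      ∨ ((M - 4 ^ 2) % 4 ≠ 0 ∧ (M - 4 ^ 2) % 8 ≠ 5) := by omega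
    rcases this with ⟨h1, h2⟩ | ⟨h1, h2⟩ | ⟨h1, h2⟩ <;>
      exact key _ (by norm_num) (by omega) (by omega) h1 h2
  · by_cases h2 : M % 2 = 1
    · exact ⟨0, good_odd _ (by omega) (by omega) (by omega)⟩
    · obtain ⟨k, rfl⟩ : ∃ k, M = 2 * k := ⟨M / 2, by omega⟩
      have key : ∀ x : ℤ, 1 ≤ k - 3 * x ^ 2 → (k - 3 * x ^ 2) % 4 ≠ 0 →
          (k - 3 * x ^ 2) % 8 ≠ 7 → HH 6 (2 * k) := by
        intro x h1 h4 h8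
        have := good_even _ h1 (by omega) h4 h8
        refine ⟨x, ?_⟩
        convert this using 1; ring
      have : ((k - 3 * 0 ^ 2) % 4 ≠ 0 ∧ (k - 3 * 0 ^ 2) % 8 ≠ 7) ∨
        ((k - 3 * 1 ^ 2) % 4 ≠ 0 ∧ (k - 3 * 1 ^ 2) % 8 ≠ 7) ∨
        ((k - 3 * 2 ^ 2) % 4 ≠ 0 ∧ (k - 3 * 2 ^ 2) % 8 ≠ 7) := by omega
      rcases this with ⟨h1, h2⟩ | ⟨h1, h2⟩ | ⟨h1, h2⟩ <;>
        exact key _ (by omega) h1 h2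

theorem universal_case_4_35 :
    ∀ α : ℤ, 5 ≤ α → α ≤ 9 → ∀ N : ℤ, 0 ≤ N →
      ∃ x y z t : ℤ,
        α * x ^ 2 + (3 * y ^ 2 - 2 * y) + 2 * (3 * z ^ 2 - 2 * z) +
          3 * (3 * t ^ 2 - 2 * t) = N := by
  intro α h1 h2 N hN
  have : HH α (N + 2) := by
    by_cases hs : N + 2 ≤ 90
    · exact small α _ h1 h2 (by omega) hs
    push Not at hs
    have : α = 5 ∨ α = 6 ∨ α = 7 ∨ α = 8 ∨ α = 9 := by omega
    rcases this with rfl | rfl | rfl | rfl | rfl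
    · exact case5 _ hs
    · exact case6 _ hs
    · exact case7 _ hs
    · exact case8 (N + 2).toNat _ (by omega) (by omega)
    · exact case9 _ hs
  obtain ⟨x, hx⟩ := this
  exact fin_lemma α N x hx
end

section
/- For every nonnegative integer N with N ≠ 14, the equation x² + y² + 3z² + 21t² = 3N + 5 has an integer solution (x, y, z, t) ∈ ℤ⁴ such that none of x, y, z is divisible by 3; moreover, for N = 14 no such solution exists. -/
def T14 (a b c r s t x y z : ℤ) : ℤ :=
  a * x ^ 2 + b * y ^ 2 + c * z ^ 2 + 2 * r * y * z + 2 * s * x * z + 2 * t * x * y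

structure Good14 (m a b c r s t : ℤ) : Prop where
  ha : 0 < a
  hp : 0 < a * b - t ^ 2
  hd : a * b * c + 2 * r * s * t - a * r ^ 2 - b * s ^ 2 - c * t ^ 2 = 21
  hr : ∃ x y z, T14 a b c r s t x y z = m
  hP : ∀ x y z, T14 a b c r s t x y z % 9 ≠ 6 ∧ T14 a b c r s t x y z % 49 ≠ 7 ∧
    T14 a b c r s t x y z % 49 ≠ 14 ∧ T14 a b c r s t x y z % 49 ≠ 28

theorem Good14.swapxy {m a b c r s t : ℤ} (h : Good14 m a b c r s t) : Good14 m b a c s r t where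
  ha := by
    have h1 := h.ha
    have h2 := h.hp
    by_contra hb
    nlinarith [sq_nonneg t]
  hp := by linarith [h.hp, mul_comm a b]
  hd := by linarith [h.hd]
  hr := by
    obtain ⟨x, y, z, e⟩ := h.hr
    exact ⟨y, x, z, by rw [← e]; unfold T14; ring⟩
  hP := by
    intro x y z
    have e : T14 b a c s r t x y z = T14 a b c r s t y x z := by unfold T14; ring
    rw [e]
    exact h.hP y x z

theorem Good14.pR {m a b c r s t : ℤ} (h : Good14 m a b c r s t) :
    (a * b - t ^ 2) * (a * c - s ^ 2) = 21 * a + (a * r - s * t) ^ 2 := by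
  linear_combination a * h.hd

theorem Good14.swapyz {m a b c r s t : ℤ} (h : Good14 m a b c r s t) : Good14 m a c b r t s where
  ha := h.ha
  hp := by
    have h1 := h.pR
    have h2 := h.hp
    have h3 := h.ha
    by_contra hb
    nlinarith [sq_nonneg (a * r - s * t)]
  hd := by linarith [h.hd]
  hr := by
    obtain ⟨x, y, z, e⟩ := h.hr
    exact ⟨x, z, y, by rw [← e]; unfold T14; ring⟩
  hP := by
    intro x y z
    have e : T14 a c b r t s x y z = T14 a b c r s t x z y := by unfold T14; ring
    rw [e]
    exact h.hP x z y

theorem Good14.tyx {m a b c r s t : ℤ} (h : Good14 m a b c r s t) (k : ℤ) :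
    Good14 m a (b + 2 * t * k + a * k ^ 2) c (r + s * k) s (t + a * k) where
  ha := h.ha
  hp := by linarith [h.hp]
  hd := by linear_combination h.hd
  hr := by
    obtain ⟨x, y, z, e⟩ := h.hr
    exact ⟨x - k * y, y, z, by rw [← e]; unfold T14; ring⟩
  hP := by
    intro x y z
    have e : T14 a (b + 2 * t * k + a * k ^ 2) c (r + s * k) s (t + a * k) x y z
      = T14 a b c r s t (x + k * y) y z := by unfold T14; ring
    rw [e]
    exact h.hP _ _ _

theorem Good14.tzx {m a b c r s t : ℤ} (h : Good14 m a b c r s t) (k : ℤ) :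
    Good14 m a b (c + 2 * s * k + a * k ^ 2) (r + t * k) (s + a * k) t where
  ha := h.ha
  hp := h.hp
  hd := by linear_combination h.hd
  hr := by
    obtain ⟨x, y, z, e⟩ := h.hr
    exact ⟨x - k * z, y, z, by rw [← e]; unfold T14; ring⟩
  hP := by
    intro x y z
    have e : T14 a b (c + 2 * s * k + a * k ^ 2) (r + t * k) (s + a * k) t x y z
      = T14 a b c r s t (x + k * z) y z := by unfold T14; ring
    rw [e]
    exact h.hP _ _ _

theorem Good14.tzy {m a b c r s t : ℤ} (h : Good14 m a b c r s t) (k : ℤ) :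
    Good14 m a b (c + 2 * r * k + b * k ^ 2) (r + b * k) (s + t * k) t where
  ha := h.ha
  hp := h.hp
  hd := by linear_combination h.hd
  hr := by
    obtain ⟨x, y, z, e⟩ := h.hr
    exact ⟨x, y - k * z, z, by rw [← e]; unfold T14; ring⟩
  hP := by
    intro x y z
    have e : T14 a b (c + 2 * r * k + b * k ^ 2) (r + b * k) (s + t * k) t x y z
      = T14 a b c r s t x (y + k * z) z := by unfold T14; ring
    rw [e]
    exact h.hP _ _ _

theorem round14 (a t : ℤ) (ha : 0 < a) : ∃ k, -a ≤ 2 * (t + a * k) ∧ 2 * (t + a * k) ≤ a := by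
  refine ⟨-((2 * t + a) / (2 * a)), ?_⟩
  have h1 := Int.emod_add_mul_ediv (2 * t + a) (2 * a)
  have h2 := Int.emod_nonneg (2 * t + a) (show 2 * a ≠ 0 by omega)
  have h3 := Int.emod_lt_of_pos (2 * t + a) (show 0 < 2 * a by omega)
  constructor <;> nlinarith

theorem red14 {m a0 b0 c0 r0 s0 t0 : ℤ} (h0 : Good14 m a0 b0 c0 r0 s0 t0) :
    ∃ a b c r s t, Good14 m a b c r s t ∧ (-a ≤ 2 * t ∧ 2 * t ≤ a) ∧ (-a ≤ 2 * s ∧ 2 * s ≤ a) ∧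
      (-(a * b - t ^ 2) ≤ 2 * (a * r - s * t) ∧ 2 * (a * r - s * t) ≤ a * b - t ^ 2) ∧
      a ≤ b ∧ a ≤ c ∧ a * b - t ^ 2 ≤ a * c - s ^ 2 := by
  classical
  have e1 : ∃ n : ℕ, ∃ b c r s t, Good14 m n b c r s t := by
    refine ⟨a0.toNat, b0, c0, r0, s0, t0, ?_⟩
    rw [Int.toNat_of_nonneg h0.ha.le]; exact h0
  have min1 : ∀ a b c r s t, Good14 m a b c r s t → (Nat.find e1 : ℤ) ≤ a := by
    intro a b c r s t h
    have : Nat.find e1 ≤ a.toNat := Nat.find_min' e1 ⟨b, c, r, s, t, by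
      rw [Int.toNat_of_nonneg h.ha.le]; exact h⟩
    have := h.ha
    omega
  obtain ⟨b1, c1, r1, s1, t1, h1⟩ := Nat.find_spec e1
  generalize (Nat.find e1 : ℤ) = a at *
  have e2 : ∃ n : ℕ, ∃ b c r s t, Good14 m a b c r s t ∧ a * b - t ^ 2 = n := by
    refine ⟨(a * b1 - t1 ^ 2).toNat, b1, c1, r1, s1, t1, h1, ?_⟩
    rw [Int.toNat_of_nonneg h1.hp.le]
  have min2 : ∀ b c r s t, Good14 m a b c r s t → (Nat.find e2 : ℤ) ≤ a * b - t ^ 2 := by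
    intro b c r s t h
    have : Nat.find e2 ≤ (a * b - t ^ 2).toNat := Nat.find_min' e2 ⟨b, c, r, s, t, h, by
      rw [Int.toNat_of_nonneg h.hp.le]⟩
    have := h.hp
    omega
  obtain ⟨b2, c2, r2, s2, t2, h2, hp2⟩ := Nat.find_spec e2
  generalize (Nat.find e2 : ℤ) = p at *
  obtain ⟨k1, hk1⟩ := round14 (a * b2 - t2 ^ 2) (a * r2 - s2 * t2) h2.hp
  have h3 := h2.tzy k1
  obtain ⟨k2, hk2⟩ := round14 a (s2 + t2 * k1) h2.ha
  have h4 := h3.tzx k2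
  obtain ⟨k3, hk3⟩ := round14 a t2 h2.ha
  have h5 := h4.tyx k3
  refine ⟨_, _, _, _, _, _, h5, hk3, hk2, ⟨?_, ?_⟩, ?_, ?_, ?_⟩
  · linarith [hk1.1]
  · linarith [hk1.2]
  · exact min1 _ _ _ _ _ _ h5.swapxy
  · exact min1 _ _ _ _ _ _ h5.swapyz.swapxy
  · have := min2 _ _ _ _ _ h5.swapyz
    linarith

set_option maxHeartbeats 4000000 in
theorem fin14 {m a0 b0 c0 r0 s0 t0 : ℤ} (h0 : Good14 m a0 b0 c0 r0 s0 t0) :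
    ∃ x y z : ℤ, x ^ 2 + y ^ 2 + 21 * z ^ 2 = m := by
  obtain ⟨a, b, c, r, s, t, h, ⟨t1, t2⟩, ⟨s1, s2⟩, ⟨q1, q2⟩, hab, hac, hpR⟩ := red14 h0
  have ha := h.ha
  have hp := h.hp
  have hR := h.pR
  have hd := h.hd
  obtain ⟨p, hpe⟩ : ∃ p, p = a * b - t ^ 2 := ⟨_, rfl⟩
  obtain ⟨R, hRe⟩ : ∃ R, R = a * c - s ^ 2 := ⟨_, rfl⟩
  obtain ⟨q, hqe⟩ : ∃ q, q = a * r - s * t := ⟨_, rfl⟩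
  rw [← hpe, ← hqe] at q1 q2
  rw [← hpe, ← hRe] at hpR
  rw [← hpe] at hp
  rw [← hpe, ← hRe, ← hqe] at hR
  have b1 : 3 * p ^ 2 ≤ 84 * a := by nlinarith
  have b2 : 3 * a ^ 2 ≤ 4 * p := by nlinarith
  have a3 : a ≤ 3 := by
    by_contra hh
    have h4 : 4 ≤ a := by omega
    have : 9 * a ^ 4 ≤ 16 * p ^ 2 := by nlinarith
    have : 27 * a ^ 4 ≤ 1344 * a := by linarith
    have : 27 * a ^ 3 ≤ 1344 := by nlinarith
    nlinarith [sq_nonneg (a - 4)]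
  have p9 : p ≤ 9 := by nlinarith
  have P1 := h.hP 0 1 1
  have P2 := h.hP 2 0 1
  have P3 := h.hP 0 0 1
  have key : a = 1 ∧ b = 1 ∧ c = 21 ∧ r = 0 ∧ s = 0 ∧ t = 0 := by
    clear h h0
    simp only [T14] at P1 P2 P3
    have t3 : -1 ≤ t := by omega
    have t4 : t ≤ 1 := by omega
    have s3 : -1 ≤ s := by omega
    have s4 : s ≤ 1 := by omega
    interval_cases a <;> interval_cases t <;> (try omega) <;> interval_cases s <;> (try omega) <;>
      interval_cases p <;> (try omega) <;>
      (have q3 : -4 ≤ q := by omega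
       have q4 : q ≤ 4 := by omega
       interval_cases q <;> omega)
  obtain ⟨rfl, rfl, rfl, rfl, rfl, rfl⟩ := key
  obtain ⟨x, y, z, e⟩ := h.hr
  exact ⟨x, y, z, by rw [← e]; unfold T14; ring⟩

theorem sq7_14 (X Y : ℤ) (h : (7 : ℤ) ∣ X ^ 2 + Y ^ 2) : (7 : ℤ) ∣ X ∧ (7 : ℤ) ∣ Y := by
  have h' := Int.emod_eq_zero_of_dvd h
  have hX : X % 7 = 0 ∨ X % 7 = 1 ∨ X % 7 = 2 ∨ X % 7 = 3 ∨ X % 7 = 4 ∨ X % 7 = 5 ∨ X % 7 = 6 := by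
    omega
  have hY : Y % 7 = 0 ∨ Y % 7 = 1 ∨ Y % 7 = 2 ∨ Y % 7 = 3 ∨ Y % 7 = 4 ∨ Y % 7 = 5 ∨ Y % 7 = 6 := by
    omega
  rcases hX with e | e | e | e | e | e | e <;> rcases hY with f | f | f | f | f | f | f <;>
    simp [pow_two, Int.add_emod, Int.mul_emod, e, f] at h' <;> omega

theorem sq3_14 (X Y : ℤ) (h : (3 : ℤ) ∣ X ^ 2 + Y ^ 2) : (3 : ℤ) ∣ X ∧ (3 : ℤ) ∣ Y := by
  have h' := Int.emod_eq_zero_of_dvd h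
  have hX : X % 3 = 0 ∨ X % 3 = 1 ∨ X % 3 = 2 := by omega
  have hY : Y % 3 = 0 ∨ Y % 3 = 1 ∨ Y % 3 = 2 := by omega
  rcases hX with e | e | e <;> rcases hY with f | f | f <;>
    simp [pow_two, Int.add_emod, Int.mul_emod, e, f] at h' <;> omega

theorem m7_14 (m x g : ℤ) (hm : ¬ (7 : ℤ) ∣ m) (h : (7 : ℤ) ∣ m ^ 2 * g - 3 * x ^ 2) :
    g % 7 ≠ 1 ∧ g % 7 ≠ 2 ∧ g % 7 ≠ 4 := by
  have h' := Int.emod_eq_zero_of_dvd h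
  have hX : m % 7 = 1 ∨ m % 7 = 2 ∨ m % 7 = 3 ∨ m % 7 = 4 ∨ m % 7 = 5 ∨ m % 7 = 6 := by
    omega
  have hY : x % 7 = 0 ∨ x % 7 = 1 ∨ x % 7 = 2 ∨ x % 7 = 3 ∨ x % 7 = 4 ∨ x % 7 = 5 ∨ x % 7 = 6 := by
    omega
  refine ⟨?_, ?_, ?_⟩ <;> intro hg <;>
  rcases hX with e | e | e | e | e | e <;> rcases hY with f | f | f | f | f | f | f <;>
    simp [pow_two, Int.sub_emod, Int.mul_emod, e, f, hg] at h'

theorem m3_14 (x g : ℤ) (h : (3 : ℤ) ∣ g - x ^ 2) : g % 3 ≠ 2 := by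
  have h' := Int.emod_eq_zero_of_dvd h
  have hY : x % 3 = 0 ∨ x % 3 = 1 ∨ x % 3 = 2 := by omega
  intro hg
  rcases hY with f | f | f <;>
    simp [pow_two, Int.sub_emod, Int.mul_emod, f, hg] at h'

theorem constr14 (m d c b : ℤ) (hm : 0 < m) (hd : 0 < d) (hc : 0 < c) (hcd : c = d * m - 21)
    (hd1 : (21 : ℤ) ∣ d - 1) (hm3 : m % 3 = 2) (hm7 : ¬ (7 : ℤ) ∣ m) (hb : c ∣ b ^ 2 + d) :
    ∃ x y z : ℤ, x ^ 2 + y ^ 2 + 21 * z ^ 2 = m := by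
  obtain ⟨a, ha⟩ := hb
  have hac : a * c - b ^ 2 = d := by linarith [mul_comm a c]
  apply fin14 (m := m) (a0 := a) (b0 := c) (c0 := m) (r0 := 0) (s0 := 1) (t0 := b)
  have hdet : a * c * m - m * b ^ 2 - c = 21 := by
    rw [hcd] at hac ⊢
    linear_combination m * hac
  obtain ⟨e, he⟩ := hd1
  have hcm : c = m + 21 * (e * m - 1) := by rw [hcd]; linear_combination m * he
  obtain ⟨w, hw⟩ : ∃ w, w = e * m - 1 := ⟨_, rfl⟩
  rw [← hw] at hcm
  refine ⟨?_, by linarith, by linear_combination hdet, ⟨0, 0, 1, by unfold T14; ring⟩, ?_⟩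
  · by_contra h
    nlinarith [sq_nonneg b]
  intro x y z
  obtain ⟨F, hF⟩ : ∃ F, F = T14 a c m 0 1 b x y z := ⟨_, rfl⟩
  rw [← hF]
  have key : c * m * F = c * (x + m * z) ^ 2 + m * (c * y + b * x) ^ 2 + 21 * x ^ 2 := by
    rw [hF]; unfold T14
    linear_combination x ^ 2 * hdet
  generalize x + m * z = X at key
  generalize c * y + b * x = Y at key
  have hP3 : IsCoprime (3 : ℤ) m := (Int.prime_three.coprime_iff_not_dvd).2 (by omega)
  have p7 : Prime (7 : ℤ) := by norm_num
  have hP7 : IsCoprime (7 : ℤ) m := (p7.coprime_iff_not_dvd).2 hm7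
  constructor
  · intro h6
    obtain ⟨G, hG⟩ : ∃ G, F = 3 * G := ⟨F / 3, by omega⟩
    have h1 : (3 : ℤ) ∣ m * (X ^ 2 + Y ^ 2) := by
      refine ⟨c * m * G - 7 * w * X ^ 2 - 7 * x ^ 2, ?_⟩
      rw [hG] at key
      linear_combination -key - X ^ 2 * hcm
    obtain ⟨⟨X', rfl⟩, ⟨Y', rfl⟩⟩ := sq3_14 X Y (hP3.dvd_of_dvd_mul_left h1)
    obtain ⟨u, hu⟩ : ∃ u, m = 3 * u + 2 := ⟨m / 3, by omega⟩
    have h2 : (3 : ℤ) ∣ G - x ^ 2 := by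
      have key2 : c * m * G = 3 * (c * X' ^ 2 + m * Y' ^ 2) + 7 * x ^ 2 := by
        rw [hG] at key; linarith
      have : c * m = 3 * (3 * u ^ 2 + 4 * u + 1 + 7 * w * m) + 1 := by
        rw [hcm, hu]; ring
      refine ⟨c * X' ^ 2 + m * Y' ^ 2 + 2 * x ^ 2 - (3 * u ^ 2 + 4 * u + 1 + 7 * w * m) * G, ?_⟩
      linear_combination key2 - G * this
    have := m3_14 _ _ h2
    omega
  · by_cases h7 : (7 : ℤ) ∣ F
    swap
    · omega
    obtain ⟨G, hG⟩ := h7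
    have h1 : (7 : ℤ) ∣ m * (X ^ 2 + Y ^ 2) := by
      refine ⟨c * m * G - 3 * w * X ^ 2 - 3 * x ^ 2, ?_⟩
      rw [hG] at key
      linear_combination -key - X ^ 2 * hcm
    obtain ⟨⟨X', rfl⟩, ⟨Y', rfl⟩⟩ := sq7_14 X Y (hP7.dvd_of_dvd_mul_left h1)
    have h2 : (7 : ℤ) ∣ m ^ 2 * G - 3 * x ^ 2 := by
      have key2 : c * m * G = 7 * (c * X' ^ 2 + m * Y' ^ 2) + 3 * x ^ 2 := by
        rw [hG] at key; linarith
      refine ⟨c * X' ^ 2 + m * Y' ^ 2 - 3 * w * m * G, ?_⟩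
      linear_combination key2 - m * G * hcm
    have := m7_14 _ _ _ hm7 h2
    omega

open NumberTheorySymbols in
theorem jac21_14 (n : ℕ) (hn : n % 2 = 1) : J(21 | n) = J(n | 21) := by
  exact_mod_cast jacobiSym.quadratic_reciprocity_one_mod_four (a := 21) (b := n) (by norm_num)
    (Nat.odd_iff.2 hn)

open NumberTheorySymbols in
theorem jm1_14 (n : ℕ) (hn : n % 4 = 1) : J(-1 | n) = 1 := by
  rw [jacobiSym.at_neg_one (Nat.odd_iff.2 (by omega)), ZMod.χ₄_nat_one_mod_four hn]

open NumberTheorySymbols in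
theorem jm3_14 (n : ℕ) (hn : n % 4 = 3) : J(-1 | n) = -1 := by
  rw [jacobiSym.at_neg_one (Nat.odd_iff.2 (by omega)), ZMod.χ₄_nat_three_mod_four hn]

open NumberTheorySymbols in
theorem jm21_14 (n : ℕ) (hn : n % 2 = 1) : J(-21 | n) = J(-1 | n) * J(n | 21) := by
  rw [← jac21_14 n hn, ← jacobiSym.mul_left]; norm_num

open NumberTheorySymbols in
theorem j2_21_14 : J(2 | 21) = -1 := by norm_num

open NumberTheorySymbols in
theorem sqr14 (q : ℕ) (hq : q.Prime) (d : ℤ) (h : J(-d | q) = 1) : ∃ b : ℤ, (q : ℤ) ∣ b ^ 2 + d := by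
  have := Fact.mk hq
  obtain ⟨u, hu⟩ := ZMod.isSquare_of_jacobiSym_eq_one h
  obtain ⟨b, rfl⟩ := ZMod.intCast_surjective u
  refine ⟨b, ?_⟩
  rw [← ZMod.intCast_zmod_eq_zero_iff_dvd]
  push_cast at hu ⊢
  rw [pow_two, ← hu]; ring

open NumberTheorySymbols in
theorem jmod14 (a b : ℤ) (q : ℕ) (k : ℤ) (h : a = b + q * k) : J(a | q) = J(b | q) := by
  apply jacobiSym.mod_left'
  rw [h, Int.add_mul_emod_self_left]

open NumberTheorySymbols in
theorem jne14 (m : ℕ) (h : Nat.Coprime m 21) : J(m | 21) ≠ 0 :=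
  jacobiSym.ne_zero (by rw [Int.gcd_natCast_natCast]; exact h)

theorem cop21_14 (m : ℕ) (h3 : m % 3 = 2) (h7 : ¬ 7 ∣ m) : Nat.Coprime m 21 := by
  have : Nat.Coprime m (3 * 7) := Nat.Coprime.mul_right
    ((Nat.Prime.coprime_iff_not_dvd Nat.prime_three).2 (by omega)).symm
    ((Nat.Prime.coprime_iff_not_dvd (by norm_num)).2 h7).symm
  simpa using this

open NumberTheorySymbols in
theorem caseA14 (m : ℕ) (h3 : m % 3 = 2) (h7 : ¬ 7 ∣ m) (h4 : m % 4 = 1) :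
    ∃ x y z : ℤ, x ^ 2 + y ^ 2 + 21 * z ^ 2 = m := by
  have hc := cop21_14 m h3 h7
  have hci : IsCoprime (m : ℤ) 21 := by exact_mod_cast Nat.isCoprime_iff_coprime.2 hc
  have cop : IsCoprime (22 * m - 21 : ℤ) ((84 * m : ℕ) : ℤ) := by
    push_cast
    apply IsCoprime.mul_right
    · have h84 : (84 : ℤ) = 4 * 21 := by norm_num
      rw [h84]
      apply IsCoprime.mul_right
      · obtain ⟨k, hk⟩ : ∃ k : ℤ, (m : ℤ) = 4 * k + 1 := ⟨m / 4, by omega⟩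
        exact ⟨1, -(22 * k), by rw [hk]; ring⟩
      · obtain ⟨u, v, huv⟩ := hci
        exact ⟨u, v - u * m + u, by linear_combination huv⟩
    · obtain ⟨u, v, huv⟩ := hci
      exact ⟨-v, u + 22 * v, by linear_combination huv⟩
  obtain ⟨q, hqn, hq, hmod⟩ := Nat.forall_exists_prime_gt_and_zmodEq (22 * m) (by omega) cop
  obtain ⟨j, hj⟩ := hmod.symm.dvd
  push_cast at hj
  have hm0 : (0 : ℤ) < m := by omega
  have hj0 : 0 ≤ j := by
    by_contra hh
    have : j ≤ -1 := by omega
    nlinarith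
  have hqe : (q : ℤ) = (84 * j + 22) * m - 21 := by linarith
  obtain ⟨k, hk⟩ : ∃ k : ℤ, (m : ℤ) = 4 * k + 1 := ⟨m / 4, by omega⟩
  have hq4 : q % 4 = 1 := by
    have : (q : ℤ) = 4 * (21 * j * m + 22 * k) + 1 := by rw [hqe]; linear_combination 22 * hk
    omega
  have j1 : J(-(84 * j + 22) | q) * J(m | q) = J(-21 | q) := by
    rw [← jacobiSym.mul_left]
    exact jmod14 _ _ _ (-1) (by rw [hqe]; ring)
  have j2 : J(m | q) = J(q | m) :=
    jacobiSym.quadratic_reciprocity_one_mod_four h4 (Nat.odd_iff.2 (by omega))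
  have j3 : J(q | m) = J(-21 | m) := jmod14 _ _ _ (84 * j + 22) (by rw [hqe]; ring)
  have j4 : J(q | 21) = J(m | 21) :=
    jmod14 _ _ _ (4 * j * m + m - 1) (by rw [hqe]; push_cast; ring)
  rw [j2, j3, jm21_14 m (by omega), jm21_14 q (by omega), jm1_14 m h4, jm1_14 q hq4, j4, one_mul]
    at j1
  have j5 : J(-(84 * j + 22) | q) = 1 := mul_right_cancel₀ (jne14 m hc) (by rw [j1, one_mul])
  obtain ⟨b, hb⟩ := sqr14 q hq _ j5
  exact constr14 m (84 * j + 22) q b hm0 (by omega) (by omega) hqe ⟨4 * j + 1, by ring⟩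
    (by omega) (by omega) hb

open NumberTheorySymbols in
theorem caseB14 (m : ℕ) (h3 : m % 3 = 2) (h7 : ¬ 7 ∣ m) (h8 : m % 8 = 7) :
    ∃ x y z : ℤ, x ^ 2 + y ^ 2 + 21 * z ^ 2 = m := by
  have hc := cop21_14 m h3 h7
  have hci : IsCoprime (m : ℤ) 21 := by exact_mod_cast Nat.isCoprime_iff_coprime.2 hc
  obtain ⟨l, hl⟩ : ∃ l : ℤ, (m : ℤ) = 8 * l + 7 := ⟨m / 8, by omega⟩
  have cop : IsCoprime (4 * l - 7 : ℤ) ((42 * m : ℕ) : ℤ) := by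
    push_cast
    apply IsCoprime.mul_right
    · have h84 : (42 : ℤ) = 2 * 21 := by norm_num
      rw [h84]
      apply IsCoprime.mul_right
      · exact ⟨1, -(2 * l - 4), by ring⟩
      · obtain ⟨u, v, huv⟩ := hci
        exact ⟨2 * u, u + v, by linear_combination huv - u * hl⟩
    · obtain ⟨u, v, huv⟩ := hci
      exact ⟨-2 * v, u + v, by linear_combination huv + v * hl⟩
  obtain ⟨q, hqn, hq, hmod⟩ := Nat.forall_exists_prime_gt_and_zmodEq (m + 2) (by omega) cop
  obtain ⟨j, hj⟩ := hmod.symm.dvd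
  push_cast at hj
  have hm0 : (0 : ℤ) < m := by omega
  have hj0 : 0 ≤ j := by
    by_contra hh
    have : j ≤ -1 := by omega
    nlinarith
  have hqe : 2 * (q : ℤ) = (84 * j + 1) * m - 21 := by linear_combination 2 * hj - hl
  have hq2 : q % 2 = 1 := by
    rcases hq.eq_two_or_odd with h | h <;> omega
  have j1 : J(-(84 * j + 1) | q) * J(m | q) = J(-21 | q) := by
    rw [← jacobiSym.mul_left]
    exact jmod14 _ _ _ (-2) (by linear_combination hqe)
  have j2 : J(-1 | q) * J(m | q) = J(q | m) := by
    rcases (show q % 4 = 1 ∨ q % 4 = 3 by omega) with h | h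
    · rw [jm1_14 q h, one_mul]
      exact jacobiSym.quadratic_reciprocity_one_mod_four' (Nat.odd_iff.2 (by omega)) h
    · rw [jm3_14 q h, jacobiSym.quadratic_reciprocity_three_mod_four (by omega) h]
      ring
  have j2' : J(-1 | q) * J(-1 | q) = 1 := by
    rcases (show q % 4 = 1 ∨ q % 4 = 3 by omega) with h | h
    · rw [jm1_14 q h, one_mul]
    · rw [jm3_14 q h]
      ring
  have j6 : J(2 | m) = 1 := by
    rw [jacobiSym.at_two (Nat.odd_iff.2 (by omega)), ZMod.χ₈_nat_eq_if_mod_eight]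
    rw [if_neg (by omega), if_pos (by omega)]
  have j3 : J(2 | m) * J(q | m) = J(-21 | m) := by
    rw [← jacobiSym.mul_left]
    exact jmod14 _ _ _ (84 * j + 1) (by rw [hqe]; ring)
  have j4 : J(2 | 21) * J(q | 21) = J(m | 21) := by
    rw [← jacobiSym.mul_left]
    exact jmod14 _ _ _ (4 * j * m - 1) (by rw [hqe]; push_cast; ring)
  rw [j6, one_mul, jm21_14 m (by omega), jm3_14 m (by omega)] at j3
  rw [j2_21_14] at j4
  rw [jm21_14 q hq2] at j1
  have j5 : J(-(84 * j + 1) | q) = 1 := by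
    apply mul_right_cancel₀ (jne14 m hc)
    rw [j3] at j2
    linear_combination (-J(-1 | q)) * j1 + J(-(84 * j + 1) | q) * j2 - J(q | 21) * j2' + j4 
  obtain ⟨b, hb⟩ := sqr14 q hq _ j5
  have hb2 : ∃ b : ℤ, (2 * q : ℤ) ∣ b ^ 2 + (84 * j + 1) := by
    have cop2 : IsCoprime (2 : ℤ) q := ⟨-(q / 2 : ℤ), 1, by omega⟩
    rcases Int.even_or_odd b with h | h
    · refine ⟨b + q, cop2.mul_dvd ?_ ?_⟩
      · obtain ⟨k, rfl⟩ := h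
        obtain ⟨k', hk'⟩ : ∃ k' : ℤ, (q : ℤ) = 2 * k' + 1 := ⟨q / 2, by omega⟩
        rw [hk']
        exact ⟨2 * (k + k') ^ 2 + 2 * (k + k') + 42 * j + 1, by ring⟩
      · obtain ⟨w, hw⟩ := hb
        exact ⟨w + 2 * b + q, by linear_combination hw⟩
    · refine ⟨b, cop2.mul_dvd ?_ hb⟩
      obtain ⟨k, rfl⟩ := h
      exact ⟨2 * k ^ 2 + 2 * k + 42 * j + 1, by ring⟩
  obtain ⟨b, hb⟩ := hb2
  exact constr14 m (84 * j + 1) (2 * q) b hm0 (by omega) (by omega) hqe ⟨4 * j, by ring⟩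
    (by omega) (by omega) hb

open NumberTheorySymbols in
theorem caseC14 (m : ℕ) (h3 : m % 3 = 2) (h7 : ¬ 7 ∣ m) (h8 : m % 8 = 2) :
    ∃ x y z : ℤ, x ^ 2 + y ^ 2 + 21 * z ^ 2 = m := by
  have hc := cop21_14 m h3 h7
  have hci : IsCoprime (m : ℤ) 21 := by exact_mod_cast Nat.isCoprime_iff_coprime.2 hc
  obtain ⟨l, hl⟩ : ∃ l : ℤ, (m : ℤ) = 8 * l + 2 := ⟨m / 8, by omega⟩
  obtain ⟨m', hm'⟩ : ∃ m' : ℕ, m = 2 * m' := ⟨m / 2, by omega⟩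
  have cop : IsCoprime (m - 21 : ℤ) ((84 * m : ℕ) : ℤ) := by
    push_cast
    apply IsCoprime.mul_right
    · have h84 : (84 : ℤ) = 4 * 21 := by norm_num
      rw [h84]
      apply IsCoprime.mul_right
      · exact ⟨1, -(2 * l - 5), by rw [hl]; ring⟩
      · obtain ⟨u, v, huv⟩ := hci
        exact ⟨u, u + v, by linear_combination huv⟩
    · obtain ⟨u, v, huv⟩ := hci
      exact ⟨-v, u + v, by linear_combination huv⟩
  obtain ⟨q, hqn, hq, hmod⟩ := Nat.forall_exists_prime_gt_and_zmodEq (m + 2) (by omega) cop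
  obtain ⟨j, hj⟩ := hmod.symm.dvd
  push_cast at hj
  have hm0 : (0 : ℤ) < m := by omega
  have hj0 : 0 ≤ j := by
    by_contra hh
    have : j ≤ -1 := by omega
    nlinarith
  have hqe : (q : ℤ) = (84 * j + 1) * m - 21 := by linear_combination hj
  have hq8 : q % 8 = 5 := by
    have : (q : ℤ) = 8 * (84 * j * l + 21 * j + l - 3) + 5 := by rw [hqe, hl]; ring
    omega
  have hmz : (m : ℤ) = 2 * m' := by omega
  have j1 : J(-(84 * j + 1) | q) * (J(2 | q) * J(m' | q)) = J(-21 | q) := by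
    rw [← jacobiSym.mul_left, ← jacobiSym.mul_left, ← hmz]
    exact jmod14 _ _ _ (-1) (by rw [hqe]; ring)
  have j2 : J(m' | q) = J(q | m') :=
    jacobiSym.quadratic_reciprocity_one_mod_four (by omega) (Nat.odd_iff.2 (by omega))
  have j3 : J(q | m') = J(-21 | m') := jmod14 _ _ _ (2 * (84 * j + 1)) (by rw [hqe, hmz]; ring)
  have j4 : J(q | 21) = J(2 | 21) * J(m' | 21) := by
    rw [← jacobiSym.mul_left, ← hmz]
    exact jmod14 _ _ _ (4 * j * m - 1) (by rw [hqe]; push_cast; ring)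
  have j6 : J(2 | q) = -1 := by
    rw [jacobiSym.at_two (Nat.odd_iff.2 (by omega)), ZMod.χ₈_nat_eq_if_mod_eight]
    rw [if_neg (by omega), if_neg (by omega)]
  rw [j2, j3, jm21_14 m' (by omega), jm21_14 q (by omega), jm1_14 m' (by omega),
    jm1_14 q (by omega), j4, j2_21_14, j6] at j1
  have hc' : Nat.Coprime m' 21 := Nat.Coprime.coprime_dvd_left ⟨2, by omega⟩ hc
  have j5 : J(-(84 * j + 1) | q) = 1 := mul_right_cancel₀ (jne14 m' hc') (by linarith)
  obtain ⟨b, hb⟩ := sqr14 q hq _ j5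
  exact constr14 m (84 * j + 1) q b hm0 (by omega) (by omega) hqe ⟨4 * j, by ring⟩
    (by omega) (by omega) hb

theorem rep14 (m : ℤ) (h0 : 0 < m) (h3 : m % 3 = 2) (h7 : ¬ (7 : ℤ) ∣ m)
    (h : m % 4 = 1 ∨ m % 8 = 7 ∨ m % 8 = 2) :
    ∃ x y z : ℤ, x ^ 2 + y ^ 2 + 21 * z ^ 2 = m := by
  lift m to ℕ using h0.le
  rcases h with h | h | h
  · exact caseA14 m (by omega) (by omega) (by omega)
  · exact caseB14 m (by omega) (by omega) (by omega)
  · exact caseC14 m (by omega) (by omega) (by omega)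

theorem use14 (n z : ℤ) (h0 : 0 < n - 3 * z ^ 2) (hn : n % 3 = 2) (hz : ¬ (3 : ℤ) ∣ z)
    (h7 : ¬ (7 : ℤ) ∣ n - 3 * z ^ 2)
    (h : (n - 3 * z ^ 2) % 4 = 1 ∨ (n - 3 * z ^ 2) % 8 = 7 ∨ (n - 3 * z ^ 2) % 8 = 2) :
    ∃ x y z t : ℤ, ¬ (3 : ℤ) ∣ x ∧ ¬ (3 : ℤ) ∣ y ∧ ¬ (3 : ℤ) ∣ z ∧
        x ^ 2 + y ^ 2 + 3 * z ^ 2 + 21 * t ^ 2 = n := by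
  obtain ⟨x, y, t, e⟩ := rep14 _ h0 (by omega) h7 h
  have aux : ∀ a b : ℤ, (3 : ℤ) ∣ a → (a ^ 2 + b ^ 2) % 3 ≠ 2 := by
    rintro a b ⟨k, rfl⟩ hh
    refine m3_14 b ((3 * k) ^ 2 + b ^ 2) ⟨3 * k ^ 2, by ring⟩ hh
  have e3 : (x ^ 2 + y ^ 2) % 3 = 2 := by omega
  exact ⟨x, y, z, t, fun hx => aux _ _ hx e3, fun hy => aux _ _ hy (by rw [add_comm]; exact e3), hz,
    by linarith⟩

theorem small14 : ∀ N : ℕ, N < 99 → N ≠ 14 → ∃ x < 18, ∃ y < 18, ∃ z < 11, ∃ t < 4,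
    ¬ 3 ∣ x ∧ ¬ 3 ∣ y ∧ ¬ 3 ∣ z ∧ x ^ 2 + y ^ 2 + 3 * z ^ 2 + 21 * t ^ 2 = 3 * N + 5 := by
  decide +kernel

theorem no14 : ¬ ∃ x < 7, ∃ y < 7, ∃ z < 4, ∃ t < 2,
    ¬ 3 ∣ x ∧ ¬ 3 ∣ y ∧ ¬ 3 ∣ z ∧ x ^ 2 + y ^ 2 + 3 * z ^ 2 + 21 * t ^ 2 = 47 := by
  decide +kernel

theorem case_5_14_representation :
    (∀ N : ℤ, 0 ≤ N → N ≠ 14 →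
      ∃ x y z t : ℤ, ¬ (3 : ℤ) ∣ x ∧ ¬ (3 : ℤ) ∣ y ∧ ¬ (3 : ℤ) ∣ z ∧
        x ^ 2 + y ^ 2 + 3 * z ^ 2 + 21 * t ^ 2 = 3 * N + 5) ∧
    ¬ ∃ x y z t : ℤ, ¬ (3 : ℤ) ∣ x ∧ ¬ (3 : ℤ) ∣ y ∧ ¬ (3 : ℤ) ∣ z ∧
        x ^ 2 + y ^ 2 + 3 * z ^ 2 + 21 * t ^ 2 = 3 * 14 + 5 := by
  constructor
  · intro N hN h14
    by_cases hs : N < 99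
    · lift N to ℕ using hN
      obtain ⟨x, -, y, -, z, -, t, -, hx, hy, hz, e⟩ := small14 N (by omega) (by omega)
      exact ⟨x, y, z, t, by omega, by omega, by omega, by exact_mod_cast e⟩
    · obtain ⟨n, hn⟩ : ∃ n, n = 3 * N + 5 := ⟨_, rfl⟩
      rw [← hn]
      obtain ⟨G, hG⟩ : ∃ G : Prop, G = (∃ x y z t : ℤ, ¬ (3 : ℤ) ∣ x ∧ ¬ (3 : ℤ) ∣ y ∧ ¬ (3 : ℤ) ∣ z ∧
        x ^ 2 + y ^ 2 + 3 * z ^ 2 + 21 * t ^ 2 = n) := ⟨_, rfl⟩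
      rw [← hG]
      have go : ∀ z : ℤ, 3 * z ^ 2 ≤ 300 → ¬ (3 : ℤ) ∣ z → ¬ (7 : ℤ) ∣ n - 3 * z ^ 2 →
          ((n - 3 * z ^ 2) % 4 = 1 ∨ (n - 3 * z ^ 2) % 8 = 7 ∨ (n - 3 * z ^ 2) % 8 = 2) → G :=
        fun z h1 h2 h3 h4 => hG ▸ use14 n z (by omega) (by omega) h2 h3 h4
      have g1 := go 1
      have g2 := go 2
      have g4 := go 4
      have g5 := go 5
      have g8 := go 8
      have g10 := go 10
      norm_num at g1 g2 g4 g5 g8 g10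
      rcases (show n % 8 = 0 ∨ n % 8 = 1 ∨ n % 8 = 2 ∨ n % 8 = 3 ∨ n % 8 = 4 ∨ n % 8 = 5 ∨
        n % 8 = 6 ∨ n % 8 = 7 by omega) with h | h | h | h | h | h | h | h
      · by_cases h7 : (7 : ℤ) ∣ n - 3
        · exact g5 (by omega) (by omega)
        · exact g1 h7 (by omega)
      · by_cases h7 : (7 : ℤ) ∣ n - 12
        · exact g4 (by omega) (by omega)
        · exact g2 h7 (by omega)
      · by_cases h7 : (7 : ℤ) ∣ n - 48
        · exact g8 (by omega) (by omega)
        · exact g4 h7 (by omega)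
      · by_cases h7 : (7 : ℤ) ∣ n - 12
        · exact g10 (by omega) (by omega)
        · exact g2 h7 (by omega)
      · by_cases h7 : (7 : ℤ) ∣ n - 3
        · exact g5 (by omega) (by omega)
        · exact g1 h7 (by omega)
      · by_cases h7 : (7 : ℤ) ∣ n - 12
        · exact g4 (by omega) (by omega)
        · exact g2 h7 (by omega)
      · by_cases h7 : (7 : ℤ) ∣ n - 12
        · exact g10 (by omega) (by omega)
        · exact g2 h7 (by omega)
      · by_cases h7 : (7 : ℤ) ∣ n - 48
        · exact g8 (by omega) (by omega)
        · exact g4 h7 (by omega)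
  · rintro ⟨x, y, z, t, hx, hy, hz, e⟩
    have e' : x.natAbs ^ 2 + y.natAbs ^ 2 + 3 * z.natAbs ^ 2 + 21 * t.natAbs ^ 2 = 47 := by
      zify
      simp only [sq_abs]
      linarith
    refine no14 ⟨x.natAbs, ?_, y.natAbs, ?_, z.natAbs, ?_, t.natAbs, ?_, by omega, by omega, by omega, e'⟩
    all_goals
      by_contra hh
      push Not at hh
      nlinarith [sq_nonneg x.natAbs]
end

section
/- The quaternary mixed sum x² + 2y² + 5(3z² − 2z) + 10(3t² − 2t) represents a nonnegative integer N if and only if N is not of the form r·25^s − 5 with integers 1 ≤ r ≤ 4 and s ≥ 1. That is, the set of nonnegative integers not represented by x²+2y²+5P₈(z)+10P₈(t) is exactly {r·25^s − 5 : 1 ≤ r ≤ 4, s ≥ 1}. -/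
namespace Oct

/-- ternary form -/
def F (a b c d e f x y z : ℤ) : ℤ :=
  a*x^2 + b*y^2 + c*z^2 + 2*d*x*y + 2*e*x*z + 2*f*y*z

def C (n a b c d e f : ℤ) : Prop :=
  0 < a ∧ 0 < a*b - d^2 ∧ a*b*c + 2*d*e*f - a*f^2 - b*e^2 - c*d^2 = 10 ∧
  (∀ x y z x' y' z' : ℤ, 5 ∣ F a b c d e f x y z → 5 ∣ F a b c d e f x' y' z' →
     5 ∣ F a b c d e f (x+x') (y+y') (z+z')) ∧
  ∃ x y z : ℤ, F a b c d e f x y z = n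

lemma C_shift12 {n a b c d e f : ℤ} (k : ℤ) (h : C n a b c d e f) :
    C n a (b + 2*k*d + k^2*a) c (d + k*a) e (f + k*e) := by
  obtain ⟨h1, h2, h3, h4, x, y, z, h5⟩ := h
  have key : ∀ x y z, F a (b + 2*k*d + k^2*a) c (d + k*a) e (f + k*e) x y z
      = F a b c d e f (x + k*y) y z := by intro x y z; unfold F; ring
  refine ⟨h1, by linarith, by linarith, ?_, x - k*y, y, z, ?_⟩
  · intro x y z x' y' z' g g'
    rw [key] at *
    have := h4 _ _ _ _ _ _ g g'
    convert this using 2; ring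
  · rw [key, ← h5]; congr 1; ring

lemma C_shift13 {n a b c d e f : ℤ} (k : ℤ) (h : C n a b c d e f) :
    C n a b (c + 2*k*e + k^2*a) d (e + k*a) (f + k*d) := by
  obtain ⟨h1, h2, h3, h4, x, y, z, h5⟩ := h
  have key : ∀ x y z, F a b (c + 2*k*e + k^2*a) d (e + k*a) (f + k*d) x y z
      = F a b c d e f (x + k*z) y z := by intro x y z; unfold F; ring
  refine ⟨h1, by linarith, by linarith, ?_, x - k*z, y, z, ?_⟩
  · intro x y z x' y' z' g g'
    rw [key] at *
    have := h4 _ _ _ _ _ _ g g'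
    convert this using 2; ring
  · rw [key, ← h5]; congr 1; ring

lemma C_shift23 {n a b c d e f : ℤ} (k : ℤ) (h : C n a b c d e f) :
    C n a b (c + 2*k*f + k^2*b) d (e + k*d) (f + k*b) := by
  obtain ⟨h1, h2, h3, h4, x, y, z, h5⟩ := h
  have key : ∀ x y z, F a b (c + 2*k*f + k^2*b) d (e + k*d) (f + k*b) x y z
      = F a b c d e f x (y + k*z) z := by intro x y z; unfold F; ring
  refine ⟨h1, by linarith, by linarith, ?_, x, y - k*z, z, ?_⟩
  · intro x y z x' y' z' g g'
    rw [key] at *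
    have := h4 _ _ _ _ _ _ g g'
    convert this using 2; ring
  · rw [key, ← h5]; congr 1; ring

lemma C_pos {n a b c d e f : ℤ} (h : C n a b c d e f) : 0 < b ∧ 0 < a*c - e^2 := by
  obtain ⟨h1, h2, h3, -, -⟩ := h
  constructor
  · by_contra hb
    nlinarith [sq_nonneg d]
  · have : (a*b-d^2)*(a*c-e^2) = 10 * a + (a*f-d*e)^2 := by rw [← h3]; ring
    by_contra hb
    nlinarith [sq_nonneg (a*f-d*e)]

lemma C_swap12 {n a b c d e f : ℤ} (h : C n a b c d e f) : C n b a c d f e := by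
  have hp := C_pos h
  obtain ⟨h1, h2, h3, h4, x, y, z, h5⟩ := h
  have key : ∀ x y z, F b a c d f e x y z = F a b c d e f y x z := by
    intro x y z; unfold F; ring
  refine ⟨hp.1, by linarith, by linarith, ?_, y, x, z, ?_⟩
  · intro x y z x' y' z' g g'
    rw [key] at *
    exact h4 _ _ _ _ _ _ g g'
  · rw [key, ← h5]

lemma C_swap23 {n a b c d e f : ℤ} (h : C n a b c d e f) : C n a c b e d f := by
  have hp := C_pos h
  obtain ⟨h1, h2, h3, h4, x, y, z, h5⟩ := h
  have key : ∀ x y z, F a c b e d f x y z = F a b c d e f x z y := by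
    intro x y z; unfold F; ring
  refine ⟨h1, hp.2, by linarith, ?_, x, z, y, ?_⟩
  · intro x y z x' y' z' g g'
    rw [key] at *
    exact h4 _ _ _ _ _ _ g g'
  · rw [key, ← h5]

lemma exists_round (m s : ℤ) (hm : 0 < m) : ∃ k : ℤ, 2 * |s + k * m| ≤ m := by
  refine ⟨-((2*s + m) / (2*m)), ?_⟩
  have h1 := Int.emod_add_mul_ediv (2*s+m) (2*m)
  have h2 := Int.emod_nonneg (2*s+m) (show 2*m ≠ 0 by omega)
  have h3 := Int.emod_lt_of_pos (2*s+m) (show 0 < 2*m by omega)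
  set q := (2*s+m) / (2*m)
  have h4 : 2 * (s + -q * m) = (2*s+m) % (2*m) - m := by linarith
  have h5 : |2 * (s + -q*m)| ≤ m := by rw [abs_le]; constructor <;> linarith
  rwa [abs_mul, abs_two] at h5

/-- existence of a reduced form -/
lemma exists_reduced {n a b c d e f : ℤ} (h : C n a b c d e f) :
    ∃ a b c d e f : ℤ, C n a b c d e f ∧ a ≤ b ∧ 2 * |d| ≤ a ∧ 2 * |e| ≤ a ∧
      2 * |a*f-d*e| ≤ a*b-d^2 ∧ a*b-d^2 ≤ a*c-e^2 := by
  classical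
  have ex1 : ∃ m : ℕ, ∃ a b c d e f : ℤ, C n a b c d e f ∧ a = m :=
    ⟨a.toNat, a, b, c, d, e, f, h, (Int.toNat_of_nonneg h.1.le).symm⟩
  obtain ⟨a, b, c, d, e, f, h, ha⟩ := Nat.find_spec ex1
  have hmin : ∀ a' b' c' d' e' f' : ℤ, C n a' b' c' d' e' f' → a ≤ a' := by
    intro a' b' c' d' e' f' h'
    have := Nat.find_min' ex1 ⟨a', b', c', d', e', f', h', (Int.toNat_of_nonneg h'.1.le).symm⟩
    have := h'.1
    omega
  clear ha
  have ex2 : ∃ m : ℕ, ∃ b c d e f : ℤ, C n a b c d e f ∧ a*b-d^2 = m :=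
    ⟨(a*b-d^2).toNat, b, c, d, e, f, h, (Int.toNat_of_nonneg h.2.1.le).symm⟩
  obtain ⟨b, c, d, e, f, h, hb⟩ := Nat.find_spec ex2
  have hmin2 : ∀ b' c' d' e' f' : ℤ, C n a b' c' d' e' f' → a*b-d^2 ≤ a*b'-d'^2 := by
    intro b' c' d' e' f' h'
    have := Nat.find_min' ex2 ⟨b', c', d', e', f', h', (Int.toNat_of_nonneg h'.2.1.le).symm⟩
    have := h'.2.1
    omega
  clear hb
  obtain ⟨k, hk⟩ := exists_round (a*b-d^2) (a*f-d*e) h.2.1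
  have h := C_shift23 k h
  rw [show a*f-d*e + k*(a*b-d^2) = a*(f+k*b) - d*(e+k*d) by ring] at hk
  generalize c + 2*k*f + k^2*b = c at h
  generalize e + k*d = e at h hk
  generalize f + k*b = f at h hk
  have ht := hmin2 _ _ _ _ _ (C_swap23 h)
  clear k
  obtain ⟨k, hd⟩ := exists_round a d h.1
  have h := C_shift12 k h
  obtain ⟨l, he⟩ := exists_round a e h.1
  have h := C_shift13 l h
  refine ⟨_, _, _, _, _, _, h, ?_, hd, he, ?_, ?_⟩
  · exact hmin _ _ _ _ _ _ (C_swap12 h)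
  · convert hk using 1
    · congr 2; ring
    · ring
  · convert ht using 1 <;> ring

lemma reduced_rep {n a b c d e f : ℤ} (hn : n % 2 = 1) (h : C n a b c d e f) :
    ∃ x y z : ℤ, n = x^2 + 2*y^2 + 5*z^2 := by
  obtain ⟨a, b, c, d, e, f, h, hab, hd, he, hs, hr⟩ := exists_reduced h
  obtain ⟨h1, h2, h3, h4, x, y, z, h5⟩ := h
  have hrt : (a*b-d^2)*(a*c-e^2) = 10 * a + (a*f-d*e)^2 := by rw [← h3]; ring
  unfold F at h5
  obtain ⟨r, hr'⟩ : ∃ r, r = a*b-d^2 := ⟨_, rfl⟩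
  obtain ⟨t, ht'⟩ : ∃ t, t = a*c-e^2 := ⟨_, rfl⟩
  obtain ⟨s, hs'⟩ : ∃ s, s = a*f-d*e := ⟨_, rfl⟩
  rw [← hr'] at h2 hs hr hrt
  rw [← ht'] at hr hrt
  rw [← hs'] at hs hrt
  have hs2 : 4 * s^2 ≤ r^2 := by
    rw [← sq_abs s]; nlinarith [abs_nonneg s]
  have hr2 : 3 * r^2 ≤ 40 * a := by nlinarith
  have hd2 : 4 * d^2 ≤ a^2 := by
    rw [← sq_abs d]; nlinarith [abs_nonneg d]
  have har : 3 * a^2 ≤ 4 * r := by nlinarith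
  have ha3 : a < 3 := by
    by_contra hh
    push Not at hh
    have : 9 * a ≤ 4 * r := by nlinarith
    nlinarith
  have hr6 : r < 6 := by nlinarith
  have hd3 := abs_le.1 (show |d| ≤ 1 by omega)
  have he3 := abs_le.1 (show |e| ≤ 1 by omega)
  have hs3 := abs_le.1 (show |s| ≤ 2 by omega)
  have hP : ∀ u v w u' v' w' : ℤ, F a b c d e f u v w % 5 = 0 → F a b c d e f u' v' w' % 5 = 0 → F a b c d e f (u+u') (v+v') (w+w') % 5 = 0 := by
    intro u v w u' v' w' g g'
    exact Int.emod_eq_zero_of_dvd (h4 _ _ _ _ _ _ (Int.dvd_of_emod_eq_zero g) (Int.dvd_of_emod_eq_zero g'))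
  clear h4
  have hd4 := abs_le.1 (show |d| ≤ a/2 by omega)
  have he4 := abs_le.1 (show |e| ≤ a/2 by omega)
  have hs4 := abs_le.1 (show |s| ≤ r/2 by omega)
  have cases : (a = 1 ∧ b = 1 ∧ d = 0 ∧ e = 0 ∧ f = 0) ∨
      (a = 1 ∧ b = 2 ∧ c = 5 ∧ d = 0 ∧ e = 0 ∧ f = 0) ∨
      (a = 2 ∧ b = 2 ∧ c = 4) ∨ (a = 2 ∧ b = 2 ∧ d = 0) := by
    clear hP h5 h3 hs hd he hs2 hr2 hd2 har
    obtain ⟨hd31, hd32⟩ := hd3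
    obtain ⟨he31, he32⟩ := he3
    obtain ⟨hs31, hs32⟩ := hs3
    obtain ⟨hd41, hd42⟩ := hd4
    obtain ⟨he41, he42⟩ := he4
    obtain ⟨hs41, hs42⟩ := hs4
    interval_cases a <;> interval_cases d <;> try omega
    all_goals interval_cases e <;> try omega
    all_goals interval_cases s <;> try omega
    all_goals interval_cases r <;> omega
  rcases cases with ⟨rfl, rfl, rfl, rfl, rfl⟩ | ⟨rfl, rfl, rfl, rfl, rfl, rfl⟩ | ⟨rfl, rfl, rfl⟩ |
    ⟨rfl, rfl, rfl⟩
  · exact absurd (hP 1 2 0 1 (-2) 0 (by simp [F]) (by simp [F])) (by simp [F])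
  · exact ⟨x, y, z, by linarith⟩
  · exfalso
    have : n = 2 * (x^2+y^2+2*z^2+d*x*y+e*x*z+f*y*z) := by linarith
    omega
  · exact absurd (hP 1 2 0 1 (-2) 0 (by simp [F]) (by simp [F])) (by simp [F])

open NumberTheorySymbols in
lemma exists_b (n : ℕ) (hn2 : n % 2 = 1) (hn5 : n % 5 ≠ 0) :
    ∃ b q : ℕ, q.Prime ∧ 0 < b ∧ n * b = q + 10 ∧ (b % 5 = 2 ∨ b % 5 = 3) ∧
      5 < q ∧ J(-(b:ℤ) | q) = 1 := by
  obtain ⟨b0, hb0⟩ : ∃ b0 : ℕ, (n % 4 = 1 ∧ b0 = 17) ∨ (n % 4 = 3 ∧ b0 = 13) := by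
    have : n % 4 = 1 ∨ n % 4 = 3 := by omega
    rcases this with h | h
    · exact ⟨17, Or.inl ⟨h, rfl⟩⟩
    · exact ⟨13, Or.inr ⟨h, rfl⟩⟩
  have h5p : Prime (5:ℤ) := by norm_num
  have hn2' : IsCoprime (2:ℤ) n := by
    rw [Int.prime_two.coprime_iff_not_dvd]; omega
  have hn5' : IsCoprime (5:ℤ) n := by
    rw [h5p.coprime_iff_not_dvd]; omega
  have hn10 : IsCoprime (2 * 5:ℤ) n := hn2'.mul_left hn5'
  have hcop : IsCoprime ((n:ℤ) * b0 - 10) ((40 * n : ℕ) : ℤ) := by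
    have c2 : IsCoprime (2:ℤ) (n * b0 - 10) := by
      rw [Int.prime_two.coprime_iff_not_dvd]
      rcases hb0 with ⟨-, rfl⟩ | ⟨-, rfl⟩ <;> omega
    have c5 : IsCoprime (5:ℤ) (n * b0 - 10) := by
      rw [h5p.coprime_iff_not_dvd]
      rcases hb0 with ⟨-, rfl⟩ | ⟨-, rfl⟩ <;> omega
    have cn : IsCoprime ((n:ℤ) * b0 - 10) n := by
      obtain ⟨u, v, huv⟩ := hn10
      exact ⟨-u, v + u * b0, by linear_combination huv⟩
    have c40 : IsCoprime ((n:ℤ) * b0 - 10) (2^3 * 5) := (c2.pow_left.mul_left c5).symm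
    have := c40.mul_right cn
    push_cast
    convert this using 2
    norm_num
  obtain ⟨q, hq, hqp, hqm⟩ := Nat.forall_exists_prime_gt_and_zmodEq (n*17+10) (by omega : 40 * n ≠ 0) hcop
  obtain ⟨t, ht⟩ := hqm.symm.dvd
  have hbn : (n:ℤ) * (b0 + 40 * t) = q + 10 := by push_cast at ht; linarith
  have hbpos : 0 < (b0:ℤ) + 40 * t := by
    have : 0 < (n:ℤ) * (b0 + 40 * t) := by rw [hbn]; positivity
    exact pos_of_mul_pos_right this (by omega)
  obtain ⟨b, hb⟩ : ∃ b : ℕ, (b:ℤ) = b0 + 40 * t := ⟨_, Int.toNat_of_nonneg hbpos.le⟩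
  rw [← hb] at hbn
  have hbn' : n * b = q + 10 := by exact_mod_cast hbn
  have hb40 : (n % 4 = 1 ∧ b % 40 = 17) ∨ (n % 4 = 3 ∧ b % 40 = 13) := by omega
  have hb4 : b % 4 = 1 := by omega
  have hbodd : Odd b := Nat.odd_iff.2 (by omega)
  have hq4 : (q + 10) % 4 = n % 4 := by
    rw [← hbn', Nat.mul_mod, hb4]; simp
  have hqodd : Odd q := Nat.odd_iff.2 (by omega)
  refine ⟨b, q, hqp, by omega, hbn', by omega, by omega, ?_⟩
  rw [jacobiSym.neg _ hqodd, jacobiSym.quadratic_reciprocity_one_mod_four hb4 hqodd]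
  have e1 : J((q:ℤ) | b) = J(-10 | b) := by
    apply jacobiSym.mod_left'
    exact (Int.emod_eq_emod_iff_emod_sub_eq_zero).2 (Int.emod_eq_zero_of_dvd ⟨n, by linarith⟩)
  rw [e1, jacobiSym.mod_right _ hbodd]
  rcases hb40 with ⟨h, h'⟩ | ⟨h, h'⟩
  · rw [show b % (4 * (-10:ℤ).natAbs) = 17 from h', ZMod.χ₄_nat_three_mod_four (by omega)]
    norm_num
  · rw [show b % (4 * (-10:ℤ).natAbs) = 13 from h', ZMod.χ₄_nat_one_mod_four (by omega)]
    norm_num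

lemma anis (b s t : ℤ) (hb : b % 5 = 2 ∨ b % 5 = 3) : (b*s^2+t^2) % 5 = 0 ↔ s % 5 = 0 ∧ t % 5 = 0 := by
  have hs : s % 5 = 0 ∨ s % 5 = 1 ∨ s % 5 = 2 ∨ s % 5 = 3 ∨ s % 5 = 4 := by omega
  have ht : t % 5 = 0 ∨ t % 5 = 1 ∨ t % 5 = 2 ∨ t % 5 = 3 ∨ t % 5 = 4 := by omega
  rcases hb with hb | hb <;> rcases hs with hs | hs | hs | hs | hs <;>
    rcases ht with ht | ht | ht | ht | ht <;>
    simp [Int.add_emod, Int.mul_emod, pow_two, hb, hs, ht]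

lemma ternary (n : ℕ) (hn2 : n % 2 = 1) (hn5 : n % 5 ≠ 0) :
    ∃ x y z : ℤ, (n:ℤ) = x^2 + 2*y^2 + 5*z^2 := by
  obtain ⟨b, q, hq, hb, hnb, hb5, hq5, hJ⟩ := exists_b n hn2 hn5
  have := Fact.mk hq
  obtain ⟨w, hw⟩ := ZMod.isSquare_of_jacobiSym_eq_one hJ
  obtain ⟨d, rfl⟩ := ZMod.intCast_surjective w
  have hdv : (q:ℤ) ∣ b + d^2 := by
    rw [← ZMod.intCast_zmod_eq_zero_iff_dvd] 
    push_cast at hw ⊢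
    rw [pow_two, ← hw]; ring
  obtain ⟨a, ha⟩ := hdv
  have hnb' : (n:ℤ) * b = q + 10 := by exact_mod_cast hnb
  have hbpos : (0:ℤ) < b := by exact_mod_cast hb
  have hqpos : (0:ℤ) < q := by have := hq.pos; exact_mod_cast this
  have hapos : 0 < a := by
    by_contra hh
    push Not at hh
    nlinarith [sq_nonneg d]
  have hbz : (b:ℤ) % 5 = 2 ∨ (b:ℤ) % 5 = 3 := by omega
  have hbq5 : IsCoprime (5:ℤ) (b * q) := by
    rw [Int.isCoprime_iff_gcd_eq_one]
    have h5 : Nat.Prime 5 := by norm_num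
    have : Nat.Coprime 5 (b * q) := by
      rw [Nat.Prime.coprime_iff_not_dvd h5, Nat.Prime.dvd_mul h5]
      rintro (h | h)
      · omega
      · have := (Nat.prime_dvd_prime_iff_eq h5 hq).1 h
        omega
    exact_mod_cast this
  have key : ∀ x y z : ℤ, 5 ∣ F a q n d 1 0 x y z ↔
      (d*x+q*y) % 5 = 0 ∧ (b*x+q*z) % 5 = 0 := by
    intro x y z
    rw [← anis b _ _ hbz]
    have e : (b*q) * F a q n d 1 0 x y z =
        (b * (d*x+q*y)^2 + (b*x+q*z)^2) + 5 * (2 * q * z^2) := by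
      unfold F
      linear_combination (-(b:ℤ) * x^2) * ha + (q * z^2:ℤ) * hnb'
    constructor
    · intro h
      have : (5:ℤ) ∣ (b*q) * F a q n d 1 0 x y z := Dvd.dvd.mul_left h _
      rw [e] at this
      omega
    · intro h
      have : (5:ℤ) ∣ (b*q) * F a q n d 1 0 x y z := by rw [e]; omega
      exact hbq5.dvd_of_dvd_mul_left this
  refine reduced_rep (n := n) (a := a) (b := q) (c := n) (d := d) (e := 1) (f := 0) (by omega)
    ⟨hapos, by linarith, ?_, ?_, 0, 0, 1, by simp [F]⟩
  · linear_combination (-(n:ℤ)) * ha + hnb'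
  · intro x y z x' y' z' g g'
    rw [key] at *
    have e1 : d*(x+x')+q*(y+y') = (d*x+q*y) + (d*x'+q*y') := by ring
    have e2 : b*(x+x')+q*(z+z') = (b*x+q*z) + (b*x'+q*z') := by ring
    rw [e1, e2]
    omega

def R (M : ℤ) : Prop := ∃ x y u v : ℤ, x^2+2*y^2+5*(u^2+2*v^2) = M ∧ 0 < u^2+2*v^2

lemma R_double {M : ℤ} (h : R M) : R (2*M) := by
  obtain ⟨x, y, u, v, h, h'⟩ := h
  exact ⟨2*y, x, 2*v, u, by linarith, by nlinarith⟩

lemma R_25 {M : ℤ} (h : R M) : R (25*M) := by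
  obtain ⟨x, y, u, v, h, h'⟩ := h
  exact ⟨5*x, 5*y, 5*u, 5*v, by linarith, by nlinarith⟩

lemma R_odd (M : ℕ) (h2 : M % 2 = 1) (h5 : M % 5 ≠ 0) (h : 6 ≤ M) : R M := by
  by_cases h7 : M = 7
  · subst h7; exact ⟨0, 1, 1, 0, by norm_num, by norm_num⟩
  by_cases h9 : M = 9
  · subst h9; exact ⟨2, 0, 1, 0, by norm_num, by norm_num⟩
  obtain ⟨x, y, z, h⟩ := ternary (M - 10) (by omega) (by omega)
  exact ⟨x, y, z, 1, by have : ((M - 10 : ℕ):ℤ) = M - 10 := by omega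
                        linarith, by nlinarith⟩

lemma R_five (M : ℕ) (h5 : M % 5 ≠ 0) (h : 6 ≤ M) : R M := by
  induction M using Nat.strong_induction_on with
  | _ M ih =>
  by_cases h2 : M % 2 = 1
  · exact R_odd M h2 h5 h
  by_cases h6 : M = 6
  · subst h6; exact ⟨1, 0, 1, 0, by norm_num, by norm_num⟩
  by_cases h8 : M = 8
  · subst h8; exact ⟨1, 1, 1, 0, by norm_num, by norm_num⟩
  have := R_double (ih (M/2) (by omega) (by omega) (by omega))
  rwa [show 2 * ((M/2 : ℕ):ℤ) = M by omega] at this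

lemma S_five (M : ℕ) (h5 : M % 5 ≠ 0) :
    ∃ x y u v : ℤ, x^2+2*y^2+5*(u^2+2*v^2) = M := by
  by_cases h : 6 ≤ M
  · obtain ⟨x, y, u, v, h, -⟩ := R_five M h5 h
    exact ⟨x, y, u, v, h⟩
  have : M = 1 ∨ M = 2 ∨ M = 3 ∨ M = 4 := by omega
  rcases this with rfl | rfl | rfl | rfl
  · exact ⟨1, 0, 0, 0, by norm_num⟩
  · exact ⟨0, 1, 0, 0, by norm_num⟩
  · exact ⟨1, 1, 0, 0, by norm_num⟩
  · exact ⟨2, 0, 0, 0, by norm_num⟩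

lemma R_all (M : ℕ) (h5 : 5 ≤ M)
    (hM : ¬ ∃ (r : ℤ) (s : ℕ), 1 ≤ r ∧ r ≤ 4 ∧ 1 ≤ s ∧ (M:ℤ) = r * 25 ^ s) : R M := by
  induction M using Nat.strong_induction_on with
  | _ M ih =>
  by_cases h : M % 5 = 0
  · obtain ⟨m, rfl⟩ : ∃ m, M = 5 * m := ⟨M/5, by omega⟩
    by_cases h' : m % 5 = 0
    · obtain ⟨k, rfl⟩ : ∃ k, m = 5 * k := ⟨m/5, by omega⟩
      have hk : 5 ≤ k := by
        by_contra hk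
        exact hM ⟨k, 1, by omega, by omega, le_refl _, by push_cast; ring⟩
      have := R_25 (ih k (by omega) hk (by
        rintro ⟨r, s, a, b, c, d⟩
        exact hM ⟨r, s+1, a, b, by omega, by push_cast; rw [d]; ring⟩))
      convert this using 1
      push_cast; ring
    · obtain ⟨x, y, u, v, hm⟩ := S_five m h'
      refine ⟨5*u, 5*v, x, y, by push_cast; linarith, ?_⟩
      have : 0 ≤ x^2 + 2*y^2 := by positivity
      have h0 : x^2 + 2*y^2 ≠ 0 := by intro h0; omega
      omega
  · exact R_five M h (by omega)

lemma R_not (s : ℕ) (r : ℤ) (_h1 : 1 ≤ r) (h4 : r ≤ 4) : ¬ R (r * 25^s) := by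
  induction s with
  | zero =>
    rintro ⟨x, y, u, v, h, h'⟩
    nlinarith [sq_nonneg x, sq_nonneg y]
  | succ s ih =>
    rintro ⟨x, y, u, v, h, h'⟩
    have h25 : x^2+2*y^2+5*(u^2+2*v^2) = 25 * (r * 25^s) := by rw [h]; ring
    have e1 := (anis 2 y x (by norm_num)).1 (by omega)
    obtain ⟨x, rfl⟩ := Int.dvd_of_emod_eq_zero e1.2
    obtain ⟨y, rfl⟩ := Int.dvd_of_emod_eq_zero e1.1
    have h5 : 5*(x^2+2*y^2)+(u^2+2*v^2) = 5 * (r * 25^s) := by linarith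
    have e2 := (anis 2 v u (by norm_num)).1 (by omega)
    obtain ⟨u, rfl⟩ := Int.dvd_of_emod_eq_zero e2.2
    obtain ⟨v, rfl⟩ := Int.dvd_of_emod_eq_zero e2.1
    exact ih ⟨x, y, u, v, by linarith, by linarith⟩

lemma prim3 (B : ℕ) : ∀ u v : ℤ, u^2+2*v^2 = B → 0 < B →
    ∃ u v : ℤ, u^2+2*v^2 = B ∧ ¬ (u % 3 = 0 ∧ v % 3 = 0) := by
  induction B using Nat.strong_induction_on with
  | _ B ih =>
  intro u v h hB
  by_cases h3 : u % 3 = 0 ∧ v % 3 = 0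
  · obtain ⟨a, rfl⟩ := Int.dvd_of_emod_eq_zero h3.1
    obtain ⟨b, rfl⟩ := Int.dvd_of_emod_eq_zero h3.2
    have h9 : (B:ℤ) = 9 * (a^2+2*b^2) := by linarith
    obtain ⟨a, b, hab, hn⟩ := ih (B/9) (by omega) a b (by omega) (by omega)
    have h9' : (B:ℤ) = 9 * (a^2+2*b^2) := by omega
    by_cases hs : (a + b) % 3 = 0
    · exact ⟨-a+4*b, 2*a+b, by rw [h9']; ring, by omega⟩
    · exact ⟨-a-4*b, 2*a-b, by rw [h9']; ring, by omega⟩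
  · exact ⟨u, v, h, h3⟩

lemma to_oct (u : ℤ) (h : u % 3 ≠ 0) : ∃ z : ℤ, u^2 = (3*z-1)^2 := by
  have : u % 3 = 1 ∨ u % 3 = 2 := by omega
  rcases this with h | h
  · exact ⟨-(u/3), by rw [show 3 * (-(u/3)) - 1 = -u by omega]; ring⟩
  · exact ⟨(u+1)/3, by rw [show 3 * ((u+1)/3) - 1 = u by omega]⟩

lemma R_iff (N : ℤ) : (∃ x y z t : ℤ,
          x ^ 2 + 2 * y ^ 2 + 5 * (3 * z ^ 2 - 2 * z) +
            10 * (3 * t ^ 2 - 2 * t) = N) ↔ R (N + 5) := by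
  constructor
  · rintro ⟨x, y, z, t, h⟩
    obtain ⟨k, hk⟩ : ∃ k, k = z - t := ⟨_, rfl⟩
    -- Z = 3z-1, T = 3t-1; (Z + T√-2)/(1+√-2)
    refine ⟨x, y, z + 2*t - 1, t - z, by rw [← h]; ring, ?_⟩
    have : 0 ≤ (z+2*t-1)^2 + 2*(t-z)^2 := by positivity
    rcases this.lt_or_eq with h0 | h0
    · exact h0
    · have a1 : (t-z)^2 = 0 := by nlinarith [sq_nonneg (z+2*t-1), sq_nonneg (t-z)]
      have a2 : (z+2*t-1)^2 = 0 := by nlinarith [sq_nonneg (z+2*t-1), sq_nonneg (t-z)]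
      rw [sq_eq_zero_iff] at a1 a2
      omega
  · rintro ⟨x, y, u, v, h, h'⟩
    obtain ⟨u, v, hB, hn⟩ := prim3 (u^2+2*v^2).toNat u v (by omega) (by omega)
    have hB' : x^2+2*y^2+5*(u^2+2*v^2) = N + 5 := by omega
    have : ∃ a b : ℤ, a % 3 ≠ 0 ∧ b % 3 ≠ 0 ∧ 3*(u^2+2*v^2) = a^2+2*b^2 := by
      by_cases hs : (u + v) % 3 = 0
      · exact ⟨u+2*v, v-u, by omega, by omega, by ring⟩
      · exact ⟨u-2*v, v+u, by omega, by omega, by ring⟩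
    obtain ⟨a, b, ha, hb, hab⟩ := this
    obtain ⟨z, hz⟩ := to_oct a ha
    obtain ⟨t, ht⟩ := to_oct b hb
    refine ⟨x, y, z, t, ?_⟩
    rw [hz, ht] at hab
    linarith

end Oct

theorem exceptions_1_2_5_10 :
    ∀ N : ℤ, 0 ≤ N →
      ((∃ x y z t : ℤ,
          x ^ 2 + 2 * y ^ 2 + 5 * (3 * z ^ 2 - 2 * z) +
            10 * (3 * t ^ 2 - 2 * t) = N) ↔
        ¬ ∃ (r : ℤ) (s : ℕ), 1 ≤ r ∧ r ≤ 4 ∧ 1 ≤ s ∧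
          N = r * 25 ^ s - 5) := by
  intro N hN
  rw [Oct.R_iff]
  constructor
  · rintro h ⟨r, s, h1, h4, -, h5⟩
    apply Oct.R_not s r h1 h4
    rwa [h5, sub_add_cancel] at h
  · intro h
    have hc : (((N+5).toNat : ℕ) : ℤ) = N + 5 := by omega
    have := Oct.R_all (N+5).toNat (by omega) (by
      rintro ⟨r, s, a, b, c, d⟩
      exact h ⟨r, s, a, b, c, by omega⟩)
    rwa [hc] at this
end

section
/- The quinary mixed sum x² + 2y² + 5(3z² − 2z) + 5(3t² − 2t) + 5(3s² − 2s) represents a nonnegative integer N (i.e., the equation x² + 2y² + 5(3z² − 2z) + 5(3t² − 2t) + 5(3s² − 2s) = N has an integer solution (x, y, z, t, s) ∈ ℤ⁵) if and only if N ≠ 20. In other words, the set of nonnegative integers not represented by x²+2y²+5P₈(z)+5P₈(t)+5P₈(s) is exactly {20}. -/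
theorem bin_reduce : ∀ (k : ℕ) (A B C D : ℤ), A.toNat ≤ k → 0 < A → 0 < D → A * C - B ^ 2 = D →
    ∃ p q r s : ℤ, p * s - q * r = 1 ∧ 0 < A * p ^ 2 + 2 * B * p * q + C * q ^ 2 ∧
      3 * (A * p ^ 2 + 2 * B * p * q + C * q ^ 2) ^ 2 ≤ 4 * D := by
  intro k
  induction k with
  | zero => intro A B C D h1 h2; omega
  | succ k ih =>
    intro A B C D hk hA hD h
    by_cases hs : 3 * A ^ 2 ≤ 4 * D
    · exact ⟨1, 0, 0, 1, by norm_num, by simpa using hA, by simpa using hs⟩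
    push Not at hs
    obtain ⟨j, hj1, hj2⟩ : ∃ j : ℤ, -A ≤ 2 * (B + j * A) ∧ 2 * (B + j * A) ≤ A := by
      refine ⟨-((2 * B + A) / (2 * A)), ?_, ?_⟩
      · have := Int.mul_ediv_self_le (x := 2 * B + A) (k := 2 * A) (by omega)
        nlinarith
      · have := Int.lt_mul_ediv_self_add (x := 2 * B + A) (k := 2 * A) (by omega)
        nlinarith
    set B' := B + j * A with hB'
    set C' := A * j ^ 2 + 2 * B * j + C with hC'
    have hd : A * C' - B' ^ 2 = D := by rw [← h, hB', hC']; ring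
    have hB2 : 4 * B' ^ 2 ≤ A ^ 2 := by nlinarith
    have hCpos : 0 < C' := by
      by_contra hc
      push Not at hc
      nlinarith [sq_nonneg B']
    have hlt : C' < A := by
      by_contra hc
      push Not at hc
      nlinarith
    obtain ⟨p, q, r, s, h1, h2, h3⟩ := ih C' (-B') A D (by omega) hCpos hD (by rw [← hd]; ring)
    -- vector (p,q) in basis (e2', -e1) : e2' = (j,1), e1=(1,0)
    have e : A * (j * p - q) ^ 2 + 2 * B * (j * p - q) * p + C * p ^ 2 =
        C' * p ^ 2 + 2 * (-B') * p * q + A * q ^ 2 := by rw [hB', hC']; ring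
    refine ⟨j * p - q, p, j * r - s, r, by linarith, ?_, ?_⟩
    · rw [e]; exact h2
    · rw [e]; exact h3

theorem one_of_sq {A : ℤ} (h : 0 < A) (h2 : 3 * A ^ 2 ≤ 4) : A = 1 := by
  nlinarith

theorem bin_two_sq (A B C : ℤ) (hA : 0 < A) (h : A * C - B ^ 2 = 1) (y z : ℤ) :
    ∃ v w : ℤ, A * y ^ 2 + 2 * B * y * z + C * z ^ 2 = v ^ 2 + w ^ 2 := by
  obtain ⟨p, q, r, s, h1, h2, h3⟩ := bin_reduce _ A B C 1 le_rfl hA one_pos h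
  have h4 := one_of_sq h2 (by simpa using h3)
  -- y = p y' + r z', z = q y' + s z'
  set B' := A * p * r + B * (p * s + q * r) + C * q * s with hB
  set C' := A * r ^ 2 + 2 * B * r * s + C * s ^ 2 with hC
  have hd : C' = 1 + B' ^ 2 := by
    have : (A * p ^ 2 + 2 * B * p * q + C * q ^ 2) * C' - B' ^ 2
        = (A * C - B ^ 2) * (p * s - q * r) ^ 2 := by rw [hB, hC]; ring
    rw [h4, h, h1] at this
    linarith
  refine ⟨(s * y - r * z) + B' * (p * z - q * y), p * z - q * y, ?_⟩
  have e1 : y = p * (s * y - r * z) + r * (p * z - q * y) := by linear_combination (-y) * h1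
  have e2 : z = q * (s * y - r * z) + s * (p * z - q * y) := by linear_combination (-z) * h1
  set Y := s * y - r * z
  set Z := p * z - q * y
  have : A * y ^ 2 + 2 * B * y * z + C * z ^ 2
      = (A * p ^ 2 + 2 * B * p * q + C * q ^ 2) * Y ^ 2 + 2 * B' * Y * Z + C' * Z ^ 2 := by
    rw [e1, e2, hB, hC]; ring
  rw [this, h4, hd]; ring

theorem tern_bound (a b h A : ℤ) (ha : 2 ≤ a) (e : a * b - h ^ 2 = A) (h2 : 0 < A)
    (h3 : 3 * A ^ 2 ≤ 4 * a) (hj1 : -a ≤ 2 * h) (hj2 : 2 * h ≤ a) : 0 < b ∧ b < a := by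
  have hh2 : 4 * h ^ 2 ≤ a ^ 2 := by nlinarith
  have hAlt : 4 * A < 3 * a ^ 2 := by
    by_contra hc
    push Not at hc
    have t1 : (3 * a ^ 2) ^ 2 ≤ (4 * A) ^ 2 := pow_le_pow_left₀ (by positivity) hc 2
    have t2 : 27 * a ^ 4 ≤ 64 * a := by nlinarith
    have t4 : (2 : ℤ) ^ 3 ≤ a ^ 3 := pow_le_pow_left₀ (by norm_num) ha 3
    have t3 : a * 8 ≤ a * a ^ 3 := mul_le_mul_of_nonneg_left (by linarith) (by linarith)
    have t5 : a * a ^ 3 = a ^ 4 := by ring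
    linarith
  constructor
  · have : 0 < a * b := by linarith [sq_nonneg h]
    exact (mul_pos_iff_of_pos_left (by linarith)).1 this
  · have : a * b < a * a := by linarith [pow_two a]
    exact lt_of_mul_lt_mul_left this (by linarith)

theorem tern : ∀ (k : ℕ) (a b c f g h : ℤ), a.toNat ≤ k → 0 < a → 0 < a * b - h ^ 2 →
    a * b * c + 2 * f * g * h - a * f ^ 2 - b * g ^ 2 - c * h ^ 2 = 1 →
    ∀ x y z : ℤ, ∃ u v w : ℤ, a * x ^ 2 + b * y ^ 2 + c * z ^ 2
      + 2 * f * y * z + 2 * g * x * z + 2 * h * x * y = u ^ 2 + v ^ 2 + w ^ 2 := by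
  intro k
  induction k with
  | zero => intro a b c f g h h1 h2; omega
  | succ k ih =>
    intro a b c f g h hk ha hA hdet x y z
    by_cases ha1 : a = 1
    · subst ha1
      obtain ⟨v, w, hvw⟩ := bin_two_sq (b - h ^ 2) (f - g * h) (c - g ^ 2) (by linarith)
        (by rw [← hdet]; ring) y z
      refine ⟨x + h * y + g * z, v, w, ?_⟩
      linear_combination hvw
    have ha2 : 2 ≤ a := by omega
    obtain ⟨p, q, r, s, h1, h2, h3⟩ := bin_reduce _ (a * b - h ^ 2) (a * f - g * h) (a * c - g ^ 2)
      a le_rfl hA ha (by linear_combination a * hdet)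
    set A' := (a * b - h ^ 2) * p ^ 2 + 2 * (a * f - g * h) * p * q + (a * c - g ^ 2) * q ^ 2 with hA'
    obtain ⟨j, hj1, hj2⟩ : ∃ j : ℤ, -a ≤ 2 * ((h * p + g * q) + j * a) ∧
        2 * ((h * p + g * q) + j * a) ≤ a := by
      refine ⟨-((2 * (h * p + g * q) + a) / (2 * a)), ?_, ?_⟩
      · have := Int.mul_ediv_self_le (x := 2 * (h * p + g * q) + a) (k := 2 * a) (by omega)
        nlinarith
      · have := Int.lt_mul_ediv_self_add (x := 2 * (h * p + g * q) + a) (k := 2 * a) (by omega)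
        nlinarith
    set h' := (h * p + g * q) + j * a with hh'
    set b' := b * p ^ 2 + 2 * f * p * q + c * q ^ 2 + 2 * j * (h * p + g * q) + j ^ 2 * a with hb'
    set g' := h * r + g * s with hg'
    set f' := b * p * r + f * (p * s + q * r) + c * q * s + j * g' with hf'
    set c' := b * r ^ 2 + 2 * f * r * s + c * s ^ 2 with hc'
    have e : a * b' - h' ^ 2 = A' := by rw [hb', hh', hA']; ring
    have hd' : b' * a * c' + 2 * g' * f' * h' - b' * g' ^ 2 - a * f' ^ 2 - c' * h' ^ 2 = 1 := by
      have : b' * a * c' + 2 * g' * f' * h' - b' * g' ^ 2 - a * f' ^ 2 - c' * h' ^ 2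
        = (a * b * c + 2 * f * g * h - a * f ^ 2 - b * g ^ 2 - c * h ^ 2)
          * (p * s - q * r) ^ 2 := by
        rw [hb', hh', hc', hf', hg']; ring
      rw [this, h1, hdet]; norm_num
    obtain ⟨hbpos, hlt⟩ := tern_bound a b' h' A' ha2 e h2 h3 hj1 hj2
    -- y = p Y + r Z, z = q Y + s Z, x = X + j Y
    obtain ⟨u, v, w, huvw⟩ := ih b' a c' g' f' h' (by omega) hbpos (by linarith) hd'
      (s * y - r * z) (x - j * (s * y - r * z)) (p * z - q * y)
    refine ⟨u, v, w, ?_⟩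
    rw [← huvw]
    have e1 : y = p * (s * y - r * z) + r * (p * z - q * y) := by linear_combination (-y) * h1
    have e2 : z = q * (s * y - r * z) + s * (p * z - q * y) := by linear_combination (-z) * h1
    generalize s * y - r * z = Y at *
    generalize p * z - q * y = Z at *
    rw [e1, e2, hb', hh', hc', hf', hg']
    ring

theorem three_sq_s18 (n : ℕ) (hn : n % 4 = 2) : ∃ u v w : ℤ, (n : ℤ) = u ^ 2 + v ^ 2 + w ^ 2 := by
  have hcop : (n - 1).Coprime (4 * n) := by
    apply Nat.Coprime.mul_right
    · have : (n - 1) % 4 = 1 := by omega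
      rw [Nat.coprime_comm, Nat.Coprime, Nat.gcd_rec, this]; norm_num
    · have h : (n - 1).Coprime (n - 1 + 1) := by simp
      rwa [Nat.sub_add_cancel (by omega)] at h
  obtain ⟨p, hp1, hp, hpm⟩ := Nat.forall_exists_prime_gt_and_modEq n (by omega) hcop
  obtain ⟨j, hj⟩ : ∃ j, p = n - 1 + 4 * n * j := by
    have := (Nat.modEq_iff_dvd' (by omega)).1 hpm.symm
    obtain ⟨j, hj⟩ := this
    exact ⟨j, by omega⟩
  have hpd : (p : ℤ) = (4 * j + 1 : ℕ) * n - 1 := by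
    rw [hj]; push_cast [Nat.cast_sub (show 1 ≤ n by omega)]; ring
  have hp4 : p % 4 = 1 := by
    have : p % 4 = (n - 1) % 4 := by rw [hj, mul_assoc, Nat.add_mul_mod_self_left]
    omega
  set d := 4 * j + 1 with hd
  have : Fact p.Prime := ⟨hp⟩
  have hJ : jacobiSym (-(d : ℤ)) p = 1 := by
    rw [← neg_one_mul, jacobiSym.mul_left, jacobiSym.at_neg_one (Nat.odd_iff.2 (by omega)),
      ZMod.χ₄_nat_one_mod_four hp4, one_mul,
      jacobiSym.quadratic_reciprocity_one_mod_four (by omega) (Nat.odd_iff.2 (by omega)),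
      jacobiSym.mod_left, hpd]
    have : ((d : ℕ) * (n : ℤ) - 1) % (d : ℤ) = (-1) % (d : ℤ) := by
      rw [sub_eq_add_neg, Int.mul_add_emod_self_left]
    rw [this, ← jacobiSym.mod_left, jacobiSym.at_neg_one (Nat.odd_iff.2 (by omega)),
      ZMod.χ₄_nat_one_mod_four (by omega)]
  rw [← jacobiSym.legendreSym.to_jacobiSym] at hJ
  have hne : (((-(d : ℤ)) : ℤ) : ZMod p) ≠ 0 := by
    intro h0
    rw [(legendreSym.eq_zero_iff p _).2 h0] at hJ
    norm_num at hJ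
  obtain ⟨t, ht⟩ := (legendreSym.eq_one_iff p hne).1 hJ
  obtain ⟨t, rfl⟩ := ZMod.intCast_surjective t
  have hdvd : (p : ℤ) ∣ t ^ 2 + d := by
    rw [← ZMod.intCast_zmod_eq_zero_iff_dvd]
    push_cast at ht ⊢
    linear_combination -ht
  obtain ⟨a, ha⟩ := hdvd
  have hp0 : (0 : ℤ) < p := by exact_mod_cast hp.pos
  have hd0 : (0 : ℤ) < d := by omega
  have ha0 : 0 < a := by
    by_contra hc
    push Not at hc
    nlinarith [sq_nonneg t]
  obtain ⟨u, v, w, h⟩ := tern _ a p n 0 1 t le_rfl ha0 (by linarith)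
    (by linear_combination (-n : ℤ) * ha - hpd) 0 0 1
  exact ⟨u, v, w, by rw [← h]; ring⟩

theorem oct_of (u : ℤ) (h : ¬ (3 : ℤ) ∣ u) : ∃ z : ℤ, u ^ 2 = 3 * (3 * z ^ 2 - 2 * z) + 1 := by
  rcases (by omega : u % 3 = 1 ∨ u % 3 = 2) with h | h
  · refine ⟨-(u / 3), ?_⟩
    have : u = 3 * (u / 3) + 1 := by omega
    generalize u / 3 = k at *
    rw [this]; ring
  · refine ⟨u / 3 + 1, ?_⟩
    have : u = 3 * (u / 3) + 2 := by omega
    generalize u / 3 = k at *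
    rw [this]; ring

theorem sq_mod9 (u : ℤ) : (3 ∣ u ∧ u ^ 2 % 9 = 0) ∨ (¬ (3 : ℤ) ∣ u ∧ u ^ 2 % 3 = 1) := by
  rcases (by omega : u % 3 = 0 ∨ u % 3 = 1 ∨ u % 3 = 2) with h | h | h
  · left
    refine ⟨by omega, ?_⟩
    obtain ⟨k, rfl⟩ : (3 : ℤ) ∣ u := by omega
    ring_nf; omega
  · exact Or.inr ⟨by omega, by rw [pow_two, Int.mul_emod, h]; rfl⟩
  · exact Or.inr ⟨by omega, by rw [pow_two, Int.mul_emod, h]; rfl⟩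

theorem three_oct (m : ℕ) (h4 : m % 4 = 1) (h3 : m % 3 ≠ 2) : ∃ z t s : ℤ,
    (3 * z ^ 2 - 2 * z) + (3 * t ^ 2 - 2 * t) + (3 * s ^ 2 - 2 * s) = m := by
  obtain ⟨u, v, w, h⟩ := three_sq_s18 (3 * m + 3) (by omega)
  push_cast at h
  have hu := sq_mod9 u
  have hv := sq_mod9 v
  have hw := sq_mod9 w
  obtain ⟨z, hz⟩ := oct_of u (by omega)
  obtain ⟨t, ht⟩ := oct_of v (by omega)
  obtain ⟨s, hs⟩ := oct_of w (by omega)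
  exact ⟨z, t, s, by linarith⟩

theorem small_cases : ∀ N < 275, N ≠ 20 →
    ∃ z ∈ [0, 1, -1, 2, -2, 3, -3, 4], ∃ t ∈ [0, 1, -1, 2, -2], ∃ s ∈ [0, 1, -1],
    ∃ x < 17, ∃ y < 12,
      ((x : ℕ) : ℤ) ^ 2 + 2 * ((y : ℕ) : ℤ) ^ 2 + 5 * (3 * z ^ 2 - 2 * z) +
            5 * (3 * t ^ 2 - 2 * t) + 5 * (3 * s ^ 2 - 2 * s) = ((N : ℕ) : ℤ) := by
  decide +kernel

theorem residues : ∀ r < 60, ∃ x < 17, ∃ y < 12, x ^ 2 + 2 * y ^ 2 ≤ 275 ∧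
    ((r + 300 - (x ^ 2 + 2 * y ^ 2)) % 60 = 5 ∨ (r + 300 - (x ^ 2 + 2 * y ^ 2)) % 60 = 45) := by
  decide +kernel

theorem exceptions_1_2_5_5_5 :
    ∀ N : ℤ, 0 ≤ N →
      ((∃ x y z t s : ℤ,
          x ^ 2 + 2 * y ^ 2 + 5 * (3 * z ^ 2 - 2 * z) +
            5 * (3 * t ^ 2 - 2 * t) + 5 * (3 * s ^ 2 - 2 * s) = N) ↔
        N ≠ 20) := by
  intro N hN
  constructor
  · rintro ⟨x, y, z, t, s, h⟩ rfl
    have key : ∀ z : ℤ, 0 ≤ 3 * z ^ 2 - 2 * z := by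
      intro z
      rcases le_or_gt z 0 with h | h <;> nlinarith
    have key2 : ∀ z : ℤ, 3 * z ^ 2 - 2 * z ≤ 4 → 3 * z ^ 2 - 2 * z = 0 ∨ 3 * z ^ 2 - 2 * z = 1 := by
      intro z hz
      have h1 : -1 < z := by nlinarith
      have h2 : z < 2 := by nlinarith
      interval_cases z <;> simp
    have hx := sq_nonneg x
    have hy := sq_nonneg y
    have kz := key z
    have kt := key t
    have ks := key s
    have kz2 := key2 z (by linarith)
    have kt2 := key2 t (by linarith)
    have ks2 := key2 s (by linarith)
    have hx1 : -5 < x := by nlinarith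
    have hx2 : x < 5 := by nlinarith
    have hy1 : -4 < y := by nlinarith
    have hy2 : y < 4 := by nlinarith
    generalize 3 * z ^ 2 - 2 * z = Z at *
    generalize 3 * t ^ 2 - 2 * t = T at *
    generalize 3 * s ^ 2 - 2 * s = S at *
    clear key key2 hx hy
    interval_cases x <;> interval_cases y <;> omega
  · intro hne
    lift N to ℕ using hN
    by_cases hs : N < 275
    · obtain ⟨z, -, t, -, s, -, x, -, y, -, h⟩ := small_cases N hs (by omega)
      exact ⟨x, y, z, t, s, h⟩
    · obtain ⟨x, -, y, -, hb, h⟩ := residues (N % 60) (Nat.mod_lt _ (by norm_num))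
      obtain ⟨z, t, s, hm⟩ := three_oct ((N - (x ^ 2 + 2 * y ^ 2)) / 5) (by omega) (by omega)
      refine ⟨x, y, z, t, s, ?_⟩
      have : (N : ℤ) = ((x ^ 2 + 2 * y ^ 2 : ℕ) : ℤ)
          + 5 * (((N - (x ^ 2 + 2 * y ^ 2)) / 5 : ℕ) : ℤ) := by omega
      rw [this, ← hm]; push_cast; ring
end
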